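/- arXiv:1711.03652 — 3 statements merged into one kernel-verified Lean document; each statement's English description precedes it below -/
import Mathlib

section
/- Let E be a complex Banach space and T : E → E a bounded linear operator, and suppose that for some integer t1 ≥ 1 the operator T^{t1} is a limit in operator norm of bounded finite-rank operators (for every ε > 0 there is a bounded linear operator F of finite rank with ‖T^{t1} − F‖ ≤ ε). Then T has a discrete spectrum away from zero: for every compact set K ⊆ ℂ \ {0}, the set spectrum(T) ∩ K is finite; every z0 ∈ spectrum(T) ∩ K is an isolated point of spectrum(T); and for all sufficiently small ε1 > 0 the Riesz projection P(z0) = (1/2πi) ∮_{|z−z0|=ε1} (zI − T)^{−1} dz is a bounded operator of finite rank. -/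
open scoped Topology

noncomputable section

/-- A continuous linear operator has finite rank if its range is
finite-dimensional. -/
def FinRank {E : Type*} [NormedAddCommGroup E] [NormedSpace ℂ E]
    (F : E →L[ℂ] E) : Prop :=
  FiniteDimensional ℂ (LinearMap.range (F : E →ₗ[ℂ] E))

/-- The Riesz projection associated with an operator `T` and a point `z0`,
at radius `r`: `(1/2πi) ∮_{|z−z0|=r} (zI − T)⁻¹ dz`. -/
noncomputable def rieszProjection {E : Type*} [NormedAddCommGroup E]
    [NormedSpace ℂ E] [CompleteSpace E] (T : E →L[ℂ] E) (z0 : ℂ) (r : ℝ) :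
    E →L[ℂ] E :=
  ((2 * Real.pi * Complex.I)⁻¹ : ℂ) •
    (∮ z in C(z0, r), Ring.inverse (algebraMap ℂ (E →L[ℂ] E) z - T))

/-!
Let `‖T ^ n - F‖ ≤ r ^ n` with `F` of finite rank, and put `S = T ^ n - F`. For `‖z‖ > r` the point
`z ^ n` lies in the resolvent set of `S`, and
`z ^ n - T ^ n = (1 - F * (z ^ n - S)⁻¹) * (z ^ n - S)`.
As `F` has finite rank, the first factor is invertible if and only if a determinant on the range of
`F` does not vanish. This determinant is holomorphic in `z` and nonzero for large `z`, so its zeros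
are isolated: near each `z₀` with `‖z₀‖ > r` the resolvent of `T ^ n` at `z ^ n` is holomorphic up
to a term `X z * F * M z` with `X` holomorphic and `M` meromorphic. The geometric sum for
`z ^ n - T ^ n` transfers this to the resolvent of `T` at `z`. Expanding `X` around `z₀`, only
finitely many Taylor coefficients contribute to the integral of `X z * F * M z` around a small
circle, each with an operator of finite rank.
-/

open Filter Set Metric

section Topology

theorem finite_inter_of_forall_eventually_nhdsNE_notMem {X : Type*} [TopologicalSpace X]
    {s K : Set X} (hK : IsCompact K) (h : ∀ x ∈ K, ∀ᶠ y in 𝓝[≠] x, y ∉ s) : (s ∩ K).Finite := by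
  by_contra hinf
  obtain ⟨x, hx, hacc⟩ := Set.Infinite.exists_accPt_of_subset_isCompact hinf hK inter_subset_right
  exact accPt_iff_frequently_nhdsNE.1 hacc ((h x hx).mono fun y hy hmem => hy hmem.1)

theorem exists_inter_closedBall_eq_singleton {X : Type*} [PseudoMetricSpace X] {s : Set X} {x : X}
    (hx : x ∈ s) (h : ∀ᶠ y in 𝓝[≠] x, y ∉ s) : ∃ ε, 0 < ε ∧ s ∩ closedBall x ε = {x} := by
  obtain ⟨ε, hε, hball⟩ := nhds_basis_closedBall.eventually_iff.1 (eventually_nhdsWithin_iff.1 h)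
  refine ⟨ε, hε, Subset.antisymm (fun y hy => ?_) ?_⟩
  · exact not_not.1 fun hyx => hball hy.2 hyx hy.1
  · exact singleton_subset_iff.2 ⟨hx, mem_closedBall_self hε.le⟩

theorem isPreconnected_compl_closedBall_zero {E : Type*} [NormedAddCommGroup E] [NormedSpace ℝ E]
    (hE : 1 < Module.rank ℝ E) {r : ℝ} (hr : 0 ≤ r) :
    IsPreconnected (closedBall (0 : E) r)ᶜ := by
  have hprod : IsPreconnected (sphere (0 : E) 1 ×ˢ Ioi r) :=
    (isPreconnected_sphere hE 0 1).prod isPreconnected_Ioi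
  convert hprod.image (fun p => p.2 • p.1) (by fun_prop) using 1
  ext x
  simp only [mem_compl_iff, mem_closedBall_zero_iff, not_le, mem_image, mem_prod,
    mem_sphere_zero_iff_norm, mem_Ioi, Prod.exists]
  constructor
  · intro hx
    have hx₀ : ‖x‖ ≠ 0 := (hr.trans_lt hx).ne'
    exact ⟨‖x‖⁻¹ • x, ‖x‖, ⟨by rw [norm_smul, norm_inv, norm_norm, inv_mul_cancel₀ hx₀], hx⟩,
      smul_inv_smul₀ hx₀ x⟩
  · rintro ⟨u, t, ⟨hu, ht⟩, rfl⟩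
    rwa [norm_smul, hu, mul_one, Real.norm_of_nonneg (hr.trans ht.le)]

end Topology

section FinRank

variable {E : Type*} [NormedAddCommGroup E] [NormedSpace ℂ E] {F G : E →L[ℂ] E}

theorem finRank_zero : FinRank (0 : E →L[ℂ] E) := by
  rw [FinRank, ContinuousLinearMap.toLinearMap_zero, LinearMap.range_zero]
  infer_instance

namespace FinRank

theorem add (hF : FinRank F) (hG : FinRank G) : FinRank (F + G) :=
  have : FiniteDimensional ℂ (LinearMap.range (F : E →ₗ[ℂ] E)) := hF
  have : FiniteDimensional ℂ (LinearMap.range (G : E →ₗ[ℂ] E)) := hG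
  Submodule.finiteDimensional_of_le (LinearMap.range_add_le (F : E →ₗ[ℂ] E) (G : E →ₗ[ℂ] E))

theorem mul_left (hF : FinRank F) (A : E →L[ℂ] E) : FinRank (A * F) := by
  have : FiniteDimensional ℂ (LinearMap.range (F : E →ₗ[ℂ] E)) := hF
  rw [FinRank, ContinuousLinearMap.toLinearMap_mul, Module.End.mul_eq_comp, LinearMap.range_comp]
  infer_instance

theorem mul_right (hF : FinRank F) (A : E →L[ℂ] E) : FinRank (F * A) :=
  have : FiniteDimensional ℂ (LinearMap.range (F : E →ₗ[ℂ] E)) := hF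
  Submodule.finiteDimensional_of_le
    (LinearMap.range_comp_le_range (A : E →ₗ[ℂ] E) (F : E →ₗ[ℂ] E))

theorem const_smul (hF : FinRank F) (c : ℂ) : FinRank (c • F) := by
  simpa only [smul_mul_assoc, one_mul] using hF.mul_left (c • 1)

end FinRank

end FinRank

section CircleIntegral

variable {E F : Type*} [NormedAddCommGroup E] [NormedSpace ℂ E] [NormedAddCommGroup F]
  [NormedSpace ℂ F] {z₀ : ℂ} {r : ℝ}

theorem circleIntegral_clm_comp_comm [CompleteSpace E] [CompleteSpace F] (L : E →L[ℂ] F)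
    {f : ℂ → E} (hf : CircleIntegrable f z₀ r) :
    (∮ z in C(z₀, r), L (f z)) = L (∮ z in C(z₀, r), f z) := by
  simpa only [circleIntegral, map_smul] using L.intervalIntegral_comp_comm hf.out

theorem circleIntegral_eq_zero_of_differentiableOn_closedBall (hr : 0 ≤ r) {f : ℂ → E}
    (hf : DifferentiableOn ℂ f (closedBall z₀ r)) : (∮ z in C(z₀, r), f z) = 0 :=
  (hf.mono closure_ball_subset_closedBall).diffContOnCl.circleIntegral_eq_zero hr

theorem circleIntegrable_inv_pow_smul (hr : 0 < r) (n : ℕ) {f : ℂ → E}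
    (hf : ContinuousOn f (sphere z₀ r)) :
    CircleIntegrable (fun z => ((z - z₀) ^ n)⁻¹ • f z) z₀ r := by
  refine ContinuousOn.circleIntegrable hr.le (ContinuousOn.fun_smul ?_ hf)
  refine ContinuousOn.inv₀ (by fun_prop) fun z hz => pow_ne_zero n ?_
  exact sub_ne_zero.2 (ne_of_mem_sphere hz hr.ne')

end CircleIntegral

section Residue

variable {E : Type*} [NormedAddCommGroup E] [NormedSpace ℂ E] [CompleteSpace E] {F : E →L[ℂ] E}
  {z₀ : ℂ} {r : ℝ} {X Z : ℂ → E →L[ℂ] E}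

-- Splitting `X z = X z₀ + (z - z₀) • dslope X z₀ z` trades a finite-rank term for one pole order.
theorem circleIntegral_inv_pow_succ_smul_mul_mul (hr : 0 < r) (n : ℕ)
    (hX : DifferentiableOn ℂ X (closedBall z₀ r)) (hZ : DifferentiableOn ℂ Z (closedBall z₀ r)) :
    (∮ z in C(z₀, r), ((z - z₀) ^ (n + 1))⁻¹ • (X z * F * Z z)) =
      X z₀ * F * (∮ z in C(z₀, r), ((z - z₀) ^ (n + 1))⁻¹ • Z z) +
        ∮ z in C(z₀, r), ((z - z₀) ^ n)⁻¹ • (dslope X z₀ z * F * Z z) := by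
  have hZ' : ContinuousOn Z (sphere z₀ r) := hZ.continuousOn.mono sphere_subset_closedBall
  have hD : ContinuousOn (dslope X z₀) (sphere z₀ r) :=
    ((Complex.differentiableOn_dslope (closedBall_mem_nhds z₀ hr)).2 hX).continuousOn.mono
      sphere_subset_closedBall
  have hZint := circleIntegrable_inv_pow_smul hr (n + 1) hZ'
  have hcomm := circleIntegral_clm_comp_comm (ContinuousLinearMap.mul ℂ _ (X z₀ * F)) hZint
  simp only [ContinuousLinearMap.mul_apply', mul_smul_comm] at hcomm
  have hfst : CircleIntegrable
      (fun z => ((z - z₀) ^ (n + 1))⁻¹ • (X z₀ * F * Z z)) z₀ r :=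
    circleIntegrable_inv_pow_smul hr (n + 1) (hZ'.const_mul _)
  have hsnd : CircleIntegrable (fun z => ((z - z₀) ^ n)⁻¹ • (dslope X z₀ z * F * Z z)) z₀ r :=
    circleIntegrable_inv_pow_smul hr n ((hD.mul_const F).mul hZ')
  rw [← hcomm, ← circleIntegral.integral_add hfst hsnd]
  refine circleIntegral.integral_congr hr.le fun z hz => ?_
  have hz₀ : z - z₀ ≠ 0 := sub_ne_zero.2 (ne_of_mem_sphere hz hr.ne')
  have hXz : X z = X z₀ + (z - z₀) • dslope X z₀ z := by
    rw [sub_smul_dslope, add_sub_cancel]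
  have hpow : ((z - z₀) ^ (n + 1))⁻¹ * (z - z₀) = ((z - z₀) ^ n)⁻¹ := by
    rw [pow_succ, mul_inv, inv_mul_cancel_right₀ hz₀]
  simp only [hXz, add_mul, smul_mul_assoc, smul_add, smul_smul, hpow]

theorem FinRank.circleIntegral_inv_pow_smul_mul_mul (hF : FinRank F) (hr : 0 < r) (n : ℕ)
    (hX : DifferentiableOn ℂ X (closedBall z₀ r)) (hZ : DifferentiableOn ℂ Z (closedBall z₀ r)) :
    FinRank (∮ z in C(z₀, r), ((z - z₀) ^ n)⁻¹ • (X z * F * Z z)) := by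
  induction n generalizing X with
  | zero =>
    simp only [pow_zero, inv_one, one_smul]
    rw [circleIntegral_eq_zero_of_differentiableOn_closedBall hr.le ((hX.mul_const F).fun_mul hZ)]
    exact finRank_zero
  | succ n ih =>
    rw [circleIntegral_inv_pow_succ_smul_mul_mul hr n hX hZ]
    exact ((hF.mul_left _).mul_right _).add
      (ih ((Complex.differentiableOn_dslope (closedBall_mem_nhds z₀ hr)).2 hX))

end Residue

section FinitelyMeromorphic

variable {E : Type*} [NormedAddCommGroup E] [NormedSpace ℂ E]

/-- An operator-valued function is *finitely meromorphic* at `z₀` if it is meromorphic there and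
the coefficients of the principal part of its Laurent series have finite rank. This is encoded by
requiring that the singular part factor, with a holomorphic left factor, through a fixed operator
of finite rank. It is what makes the residue of the resolvent, the Riesz projection, have finite
rank. -/
def FinitelyMeromorphicAt (f : ℂ → E →L[ℂ] E) (z₀ : ℂ) : Prop :=
  ∃ (F : E →L[ℂ] E) (H X M : ℂ → E →L[ℂ] E), FinRank F ∧ AnalyticAt ℂ H z₀ ∧
    AnalyticAt ℂ X z₀ ∧ MeromorphicAt M z₀ ∧ ∀ᶠ z in 𝓝[≠] z₀, f z = H z + X z * F * M z

namespace FinitelyMeromorphicAt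

variable {f g : ℂ → E →L[ℂ] E} {z₀ : ℂ}

theorem congr (hf : FinitelyMeromorphicAt f z₀) (hfg : f =ᶠ[𝓝[≠] z₀] g) :
    FinitelyMeromorphicAt g z₀ := by
  obtain ⟨F, H, X, M, hF, hH, hX, hM, hfeq⟩ := hf
  exact ⟨F, H, X, M, hF, hH, hX, hM, hfg.symm.trans hfeq⟩

theorem analyticAt_mul (hf : FinitelyMeromorphicAt f z₀) (hg : AnalyticAt ℂ g z₀) :
    FinitelyMeromorphicAt (fun z => g z * f z) z₀ := by
  obtain ⟨F, H, X, M, hF, hH, hX, hM, hfeq⟩ := hf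
  refine ⟨F, fun z => g z * H z, fun z => g z * X z, M, hF, hg.mul hH, hg.mul hX, hM, ?_⟩
  filter_upwards [hfeq] with z hz
  rw [hz, mul_add, ← mul_assoc, ← mul_assoc]

theorem eventually_finRank_circleIntegral [CompleteSpace E] (hf : FinitelyMeromorphicAt f z₀) :
    ∀ᶠ r in 𝓝[>] (0 : ℝ), FinRank (∮ z in C(z₀, r), f z) := by
  obtain ⟨F, H, X, M, hF, hH, hX, ⟨n, hM⟩, hfeq⟩ := hf
  set Z : ℂ → E →L[ℂ] E := fun z => (z - z₀) ^ n • M z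
  have hgood : ∀ᶠ z in 𝓝 z₀, (AnalyticAt ℂ H z ∧ AnalyticAt ℂ X z ∧ AnalyticAt ℂ Z z) ∧
      (z ≠ z₀ → f z = H z + X z * F * M z) :=
    (hH.eventually_analyticAt.and (hX.eventually_analyticAt.and hM.eventually_analyticAt)).and
      (eventually_nhdsWithin_iff.1 hfeq)
  filter_upwards [self_mem_nhdsWithin,
    nhdsWithin_le_nhds (eventually_closedBall_subset hgood)] with r (hr : 0 < r) hball
  have hHr : DifferentiableOn ℂ H (closedBall z₀ r) := fun z hz =>
    (hball hz).1.1.differentiableWithinAt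
  have hXr : DifferentiableOn ℂ X (closedBall z₀ r) := fun z hz =>
    (hball hz).1.2.1.differentiableWithinAt
  have hZr : DifferentiableOn ℂ Z (closedBall z₀ r) := fun z hz =>
    (hball hz).1.2.2.differentiableWithinAt
  have hHint : CircleIntegrable H z₀ r :=
    (hHr.continuousOn.mono sphere_subset_closedBall).circleIntegrable hr.le
  have hXFZint : CircleIntegrable (fun z => ((z - z₀) ^ n)⁻¹ • (X z * F * Z z)) z₀ r :=
    circleIntegrable_inv_pow_smul hr n
      (((hXr.mul_const F).mul hZr).continuousOn.mono sphere_subset_closedBall)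
  have hsplit : (∮ z in C(z₀, r), f z) =
      (∮ z in C(z₀, r), H z) + ∮ z in C(z₀, r), ((z - z₀) ^ n)⁻¹ • (X z * F * Z z) := by
    rw [← circleIntegral.integral_add hHint hXFZint]
    refine circleIntegral.integral_congr hr.le fun z hz => ?_
    have hz₀ : z ≠ z₀ := ne_of_mem_sphere hz hr.ne'
    simp only [Z, (hball (sphere_subset_closedBall hz)).2 hz₀, mul_smul_comm,
      inv_smul_smul₀ (pow_ne_zero n (sub_ne_zero.2 hz₀))]
  rw [hsplit, circleIntegral_eq_zero_of_differentiableOn_closedBall hr.le hHr, zero_add]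
  exact hF.circleIntegral_inv_pow_smul_mul_mul hr n hXr hZr

end FinitelyMeromorphicAt

end FinitelyMeromorphic

section Inverse

variable {𝕜 : Type*} [NontriviallyNormedField 𝕜]

section Matrix

variable {E m : Type*} [NormedAddCommGroup E] [NormedSpace 𝕜 E] [Fintype m] [DecidableEq m] {x : E}
  {A : E → Matrix m m 𝕜}

theorem analyticAt_matrix_det (hA : ∀ i j, AnalyticAt 𝕜 (fun y => A y i j) x) :
    AnalyticAt 𝕜 (fun y => (A y).det) x := by
  simp only [Matrix.det_apply']
  exact Finset.analyticAt_fun_sum _ fun σ _ =>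
    analyticAt_const.fun_mul (Finset.analyticAt_fun_prod _ fun i _ => hA (σ i) i)

theorem analyticAt_matrix_adjugate (hA : ∀ i j, AnalyticAt 𝕜 (fun y => A y i j) x) (i j : m) :
    AnalyticAt 𝕜 (fun y => (A y).adjugate i j) x := by
  simp only [Matrix.adjugate_apply]
  refine analyticAt_matrix_det fun k l => ?_
  by_cases hk : k = j
  · simpa only [hk, Matrix.updateRow_self] using analyticAt_const
  · simpa only [Matrix.updateRow_ne hk] using hA k l

theorem meromorphicAt_matrix_inv {A : 𝕜 → Matrix m m 𝕜} {z₀ : 𝕜}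
    (hA : ∀ i j, AnalyticAt 𝕜 (fun z => A z i j) z₀) (i j : m) :
    MeromorphicAt (fun z => (A z)⁻¹ i j) z₀ := by
  simp only [Matrix.inv_def, Ring.inverse_eq_inv, Matrix.smul_apply]
  exact (analyticAt_matrix_det hA).meromorphicAt.inv.smul
    (analyticAt_matrix_adjugate hA i j).meromorphicAt

end Matrix

section FiniteDimensional

variable [CompleteSpace 𝕜] {E V : Type*} [NormedAddCommGroup E] [NormedSpace 𝕜 E]
  [NormedAddCommGroup V] [NormedSpace 𝕜 V] [FiniteDimensional 𝕜 V]

theorem analyticAt_toMatrix {D : E → V →L[𝕜] V} {x : E} {m : Type*} [Fintype m] [DecidableEq m]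
    (b : Module.Basis m 𝕜 V) (hD : AnalyticAt 𝕜 D x) (i j : m) :
    AnalyticAt 𝕜 (fun y => LinearMap.toMatrix b b (D y : V →ₗ[𝕜] V) i j) x := by
  simp only [LinearMap.toMatrix_apply]
  exact ((b.coord i).toContinuousLinearMap ∘L
    ContinuousLinearMap.apply 𝕜 V (b j)).analyticAt _ |>.comp hD

theorem analyticAt_continuousLinearMap_det {D : E → V →L[𝕜] V} {x : E} (hD : AnalyticAt 𝕜 D x) :
    AnalyticAt 𝕜 (fun y => (D y).det) x := by
  simp only [ContinuousLinearMap.det, ← LinearMap.det_toMatrix (Module.finBasis 𝕜 V)]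
  exact analyticAt_matrix_det (analyticAt_toMatrix _ hD)

theorem isUnit_continuousLinearMap_iff_det_ne_zero (D : V →L[𝕜] V) : IsUnit D ↔ D.det ≠ 0 := by
  rw [← MulEquiv.isUnit_map (Module.End.toContinuousLinearMap V).symm]
  exact (LinearMap.isUnit_iff_isUnit_det _).trans isUnit_iff_ne_zero

theorem map_ringInverse {M N F : Type*} [MonoidWithZero M] [MonoidWithZero N] [EquivLike F M N]
    [MulEquivClass F M N] (e : F) (a : M) : e (Ring.inverse a) = Ring.inverse (e a) := by
  by_cases ha : IsUnit a
  · rw [eq_comm, ← mul_one (Ring.inverse _), Ring.inverse_mul_eq_iff_eq_mul _ _ _ (ha.map e),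
      ← map_mul, Ring.mul_inverse_cancel _ ha, map_one]
  · rw [Ring.inverse_non_unit _ ha, Ring.inverse_non_unit _ (by simpa using ha), map_zero]

theorem meromorphicAt_ringInverse {D : 𝕜 → V →L[𝕜] V} {z₀ : 𝕜} (hD : AnalyticAt 𝕜 D z₀) :
    MeromorphicAt (fun z => Ring.inverse (D z)) z₀ := by
  let b := Module.finBasis 𝕜 V
  let e : (V →L[𝕜] V) ≃ₐ[𝕜] Matrix _ _ 𝕜 :=
    (Module.End.toContinuousLinearMap V).symm.trans (LinearMap.toMatrixAlgEquiv b)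
  have hinv (z : 𝕜) : Ring.inverse (D z) =
      ∑ i, ∑ j, (e (D z))⁻¹ i j • e.symm (Matrix.single i j 1) := by
    rw [← e.symm_apply_apply (Ring.inverse _), map_ringInverse e,
      ← Matrix.nonsing_inv_eq_ringInverse]
    conv_lhs => rw [Matrix.matrix_eq_sum_single (e (D z))⁻¹]
    simp only [map_sum, ← map_smul, Matrix.smul_single, smul_eq_mul, mul_one]
  simp only [hinv]
  exact MeromorphicAt.fun_sum fun i _ => MeromorphicAt.fun_sum fun j _ =>
    (meromorphicAt_matrix_inv (analyticAt_toMatrix b hD) i j).smul (.const _ _)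

end FiniteDimensional

variable {V E : Type*} [NormedAddCommGroup V] [NormedSpace 𝕜 V] [NormedAddCommGroup E]
  [NormedSpace 𝕜 E]

theorem one_sub_comp_mul_one_add_comp (ι : V →L[𝕜] E) (ρ : E →L[𝕜] V) {B : V →L[𝕜] V}
    (hB : (1 - ρ ∘L ι) * B = 1) : (1 - ι ∘L ρ) * (1 + ι ∘L B ∘L ρ) = 1 :=
  calc (1 - ι ∘L ρ) * (1 + ι ∘L B ∘L ρ)
      = 1 - ι ∘L ρ + ι ∘L ((1 - ρ ∘L ι) * B) ∘L ρ := by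
        ext v
        simp [mul_add, sub_mul]
    _ = 1 := by
        rw [hB]
        simp [ContinuousLinearMap.one_def]

theorem one_add_comp_mul_one_sub_comp (ι : V →L[𝕜] E) (ρ : E →L[𝕜] V) {B : V →L[𝕜] V}
    (hB : B * (1 - ρ ∘L ι) = 1) : (1 + ι ∘L B ∘L ρ) * (1 - ι ∘L ρ) = 1 :=
  calc (1 + ι ∘L B ∘L ρ) * (1 - ι ∘L ρ)
      = 1 - ι ∘L ρ + ι ∘L (B * (1 - ρ ∘L ι)) ∘L ρ := by
        ext v
        simp only [mul_sub, mul_one, add_mul, one_mul, sub_apply, add_apply, one_apply_eq_self,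
          ContinuousLinearMap.comp_apply, mul_apply_eq_comp, ContinuousLinearMap.sub_comp,
          ContinuousLinearMap.comp_sub]
        abel
    _ = 1 := by
        rw [hB]
        simp [ContinuousLinearMap.one_def]

theorem ringInverse_one_sub_comp (ι : V →L[𝕜] E) (ρ : E →L[𝕜] V) (h : IsUnit (1 - ρ ∘L ι)) :
    Ring.inverse (1 - ι ∘L ρ) = 1 + ι ∘L Ring.inverse (1 - ρ ∘L ι) ∘L ρ :=
  Ring.inverse_unit ⟨_, _, one_sub_comp_mul_one_add_comp ι ρ (Ring.mul_inverse_cancel _ h),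
    one_add_comp_mul_one_sub_comp ι ρ (Ring.inverse_mul_cancel _ h)⟩

theorem isUnit_one_sub_comp (ι : V →L[𝕜] E) (ρ : E →L[𝕜] V) (h : IsUnit (1 - ρ ∘L ι)) :
    IsUnit (1 - ι ∘L ρ) :=
  ⟨⟨_, _, one_sub_comp_mul_one_add_comp ι ρ (Ring.mul_inverse_cancel _ h),
    one_add_comp_mul_one_sub_comp ι ρ (Ring.inverse_mul_cancel _ h)⟩, rfl⟩

theorem isUnit_one_sub_comp_comm {ι : V →L[𝕜] E} {ρ : E →L[𝕜] V} :
    IsUnit (1 - ι ∘L ρ) ↔ IsUnit (1 - ρ ∘L ι) :=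
  ⟨isUnit_one_sub_comp ρ ι, isUnit_one_sub_comp ι ρ⟩

section Fredholm

variable {E V W : Type*} [NormedAddCommGroup E] [NormedSpace 𝕜 E] [NormedAddCommGroup V]
  [NormedSpace 𝕜 V] [NormedAddCommGroup W] [NormedSpace 𝕜 W] {z₀ : 𝕜}

theorem analyticAt_clm_comp {F : Type*} [NormedAddCommGroup F] [NormedSpace 𝕜 F] {x : F}
    {A : F → V →L[𝕜] W} {B : F → E →L[𝕜] V} (hA : AnalyticAt 𝕜 A x) (hB : AnalyticAt 𝕜 B x) :
    AnalyticAt 𝕜 (fun y => A y ∘L B y) x :=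
  ((ContinuousLinearMap.compL 𝕜 E V W).analyticAt_bilinear (A x, B x)).comp₂ hA hB

theorem meromorphicAt_clm_comp {A : 𝕜 → V →L[𝕜] W} {B : 𝕜 → E →L[𝕜] V}
    (hA : MeromorphicAt A z₀) (hB : MeromorphicAt B z₀) :
    MeromorphicAt (fun z => A z ∘L B z) z₀ := by
  obtain ⟨m, hm⟩ := hA
  obtain ⟨n, hn⟩ := hB
  refine ⟨m + n, ?_⟩
  simpa only [ContinuousLinearMap.smul_comp, ContinuousLinearMap.comp_smul, smul_smul, ← pow_add,
    add_comm n m] using analyticAt_clm_comp hm hn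

variable {ι : V →L[𝕜] E} {ρ : 𝕜 → E →L[𝕜] V}

theorem analyticAt_one_sub_comp (hρ : AnalyticAt 𝕜 ρ z₀) :
    AnalyticAt 𝕜 (fun z => 1 - ρ z ∘L ι) z₀ :=
  analyticAt_const.sub (analyticAt_clm_comp hρ analyticAt_const)

variable [CompleteSpace 𝕜] [FiniteDimensional 𝕜 V]

theorem meromorphicAt_ringInverse_one_sub_comp (hρ : AnalyticAt 𝕜 ρ z₀)
    (hunit : ∀ᶠ z in 𝓝[≠] z₀, IsUnit (1 - ι ∘L ρ z)) :
    MeromorphicAt (fun z => Ring.inverse (1 - ι ∘L ρ z)) z₀ := by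
  have hmain : MeromorphicAt (fun z => 1 + ι ∘L Ring.inverse (1 - ρ z ∘L ι) ∘L ρ z) z₀ :=
    (MeromorphicAt.const 1 z₀).add <| meromorphicAt_clm_comp (.const ι z₀) <|
      meromorphicAt_clm_comp (meromorphicAt_ringInverse (analyticAt_one_sub_comp hρ))
        hρ.meromorphicAt
  refine hmain.congr ?_
  filter_upwards [hunit] with z hz
  exact (ringInverse_one_sub_comp ι (ρ z) (isUnit_one_sub_comp_comm.1 hz)).symm

theorem eventually_isUnit_one_sub_comp {U : Set 𝕜} (hρ : AnalyticOnNhd 𝕜 ρ U)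
    (hU : IsPreconnected U) {w : 𝕜} (hw : w ∈ U) (hunit : IsUnit (1 - ι ∘L ρ w)) (hz₀ : z₀ ∈ U) :
    ∀ᶠ z in 𝓝[≠] z₀, IsUnit (1 - ι ∘L ρ z) := by
  have hdet : AnalyticOnNhd 𝕜 (fun z => (1 - ρ z ∘L ι).det) U := fun z hz =>
    analyticAt_continuousLinearMap_det (analyticAt_one_sub_comp (hρ z hz))
  simp only [isUnit_one_sub_comp_comm (ι := ι),
    isUnit_continuousLinearMap_iff_det_ne_zero] at hunit ⊢
  by_contra hfreq
  exact hunit (hdet.eqOn_zero_of_preconnected_of_frequently_eq_zero hU hz₀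
    (by simpa using hfreq) hw)

end Fredholm

end Inverse

section Resolvent

variable {𝕜 A : Type*} [Field 𝕜] [Ring A] [Algebra 𝕜 A] {a b : A} {z : 𝕜}

theorem mem_resolventSet_of_pow_mem_resolventSet {n : ℕ} (h : z ^ n ∈ resolventSet 𝕜 (a ^ n)) :
    z ∈ resolventSet 𝕜 a :=
  not_not.1 fun hz => spectrum.pow_mem_pow a n hz h

theorem resolvent_eq_geom_sum_mul_resolvent_pow {n : ℕ} (h : z ^ n ∈ resolventSet 𝕜 (a ^ n)) :
    resolvent a z = (∑ i ∈ Finset.range n, algebraMap 𝕜 A z ^ i * a ^ (n - 1 - i)) *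
      resolvent (a ^ n) (z ^ n) := by
  set S := ∑ i ∈ Finset.range n, algebraMap 𝕜 A z ^ i * a ^ (n - 1 - i)
  have hcomm : Commute (algebraMap 𝕜 A z) a := Algebra.commutes z a
  have hS : algebraMap 𝕜 A (z ^ n) - a ^ n = (algebraMap 𝕜 A z - a) * S := by
    rw [map_pow, hcomm.mul_geom_sum₂]
  have hz : IsUnit (algebraMap 𝕜 A z - a) := mem_resolventSet_of_pow_mem_resolventSet h
  rw [resolvent, resolvent, Ring.eq_mul_inverse_iff_mul_eq _ _ _ h, hS,
    Ring.inverse_mul_cancel_left _ _ hz]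

theorem algebraMap_sub_add_eq_mul (hz : z ∈ resolventSet 𝕜 a) :
    algebraMap 𝕜 A z - (a + b) = (1 - b * resolvent a z) * (algebraMap 𝕜 A z - a) := by
  rw [sub_mul, one_mul, resolvent, Ring.inverse_mul_cancel_right _ _ hz, sub_add_eq_sub_sub]

theorem mem_resolventSet_add_iff (hz : z ∈ resolventSet 𝕜 a) :
    z ∈ resolventSet 𝕜 (a + b) ↔ IsUnit (1 - b * resolvent a z) := by
  rw [spectrum.mem_resolventSet_iff, algebraMap_sub_add_eq_mul hz, IsUnit.mul_right_iff hz]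

theorem resolvent_add (hz : z ∈ resolventSet 𝕜 a) :
    resolvent (a + b) z = resolvent a z * Ring.inverse (1 - b * resolvent a z) := by
  rw [resolvent, algebraMap_sub_add_eq_mul hz, Ring.inverse_mul (.inr hz), resolvent]

end Resolvent

theorem analyticAt_resolvent {𝕜 A : Type*} [NontriviallyNormedField 𝕜] [NormedRing A]
    [NormedAlgebra 𝕜 A] [HasSummableGeomSeries A] {a : A} {z : 𝕜} (hz : z ∈ resolventSet 𝕜 a) :
    AnalyticAt 𝕜 (resolvent a) z :=
  AnalyticAt.fun_comp (g := Ring.inverse) (analyticAt_inverse hz.unit)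
    (((algebraMapCLM 𝕜 A).analyticAt z).sub analyticAt_const)

section PowerNearFinRank

variable {E : Type*} [NormedAddCommGroup E] [NormedSpace ℂ E]
  {F T : E →L[ℂ] E} {K : ℂ → E →L[ℂ] E} {z z₀ : ℂ} {n : ℕ} {r : ℝ}

namespace FinRank

theorem exists_mul_eq_subtypeL_comp (hF : FinRank F) : ∃ (V : Submodule ℂ E) (π : E →L[ℂ] V),
    FiniteDimensional ℂ V ∧ ∀ A : E →L[ℂ] E, F * A = V.subtypeL ∘L (π ∘L A) :=
  ⟨LinearMap.range (F : E →ₗ[ℂ] E), F.rangeRestrict, hF, fun _ => rfl⟩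

theorem finitelyMeromorphicAt_ringInverse_one_sub_mul (hF : FinRank F) (hK : AnalyticAt ℂ K z₀)
    (hunit : ∀ᶠ z in 𝓝[≠] z₀, IsUnit (1 - F * K z)) :
    FinitelyMeromorphicAt (fun z => Ring.inverse (1 - F * K z)) z₀ := by
  obtain ⟨V, π, _, hfactor⟩ := hF.exists_mul_eq_subtypeL_comp
  have hinv : MeromorphicAt (fun z => Ring.inverse (1 - F * K z)) z₀ := by
    simp only [hfactor] at hunit ⊢
    exact meromorphicAt_ringInverse_one_sub_comp (analyticAt_clm_comp analyticAt_const hK) hunit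
  have hKinv : MeromorphicAt (fun z => K z * Ring.inverse (1 - F * K z)) z₀ :=
    meromorphicAt_clm_comp hK.meromorphicAt hinv
  refine ⟨F, fun _ => 1, fun _ => 1, fun z => K z * Ring.inverse (1 - F * K z), hF,
    analyticAt_const, analyticAt_const, hKinv, ?_⟩
  filter_upwards [hunit] with z hz
  have hcancel := Ring.mul_inverse_cancel _ hz
  rw [sub_mul, one_mul, sub_eq_iff_eq_add, mul_assoc] at hcancel
  rwa [one_mul]

theorem eventually_isUnit_one_sub_mul {U : Set ℂ} (hF : FinRank F) (hK : AnalyticOnNhd ℂ K U)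
    (hU : IsPreconnected U) {w : ℂ} (hw : w ∈ U) (hunit : IsUnit (1 - F * K w)) (hz₀ : z₀ ∈ U) :
    ∀ᶠ z in 𝓝[≠] z₀, IsUnit (1 - F * K z) := by
  obtain ⟨V, π, _, hfactor⟩ := hF.exists_mul_eq_subtypeL_comp
  simp only [hfactor] at hunit ⊢
  exact eventually_isUnit_one_sub_comp
    (fun z hz => analyticAt_clm_comp analyticAt_const (hK z hz)) hU hw hunit hz₀

end FinRank

theorem finitelyMeromorphicAt_resolvent_of_pow
    (hpow : FinitelyMeromorphicAt (fun z => resolvent (T ^ n) (z ^ n)) z₀)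
    (h : ∀ᶠ z in 𝓝[≠] z₀, z ^ n ∈ resolventSet ℂ (T ^ n)) :
    FinitelyMeromorphicAt (resolvent T) z₀ := by
  have hsum : AnalyticAt ℂ (fun z : ℂ =>
      ∑ i ∈ Finset.range n, algebraMap ℂ (E →L[ℂ] E) z ^ i * T ^ (n - 1 - i)) z₀ :=
    Finset.analyticAt_fun_sum _ fun i _ =>
      (((algebraMapCLM ℂ (E →L[ℂ] E)).analyticAt z₀).fun_pow i).mul analyticAt_const
  refine (hpow.analyticAt_mul hsum).congr ?_
  filter_upwards [h] with z hz
  exact (resolvent_eq_geom_sum_mul_resolvent_pow hz).symm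

variable [CompleteSpace E]

theorem mem_resolventSet_of_opNorm_lt (h : ‖T‖ < ‖z‖) : z ∈ resolventSet ℂ T :=
  spectrum.mem_resolventSet_of_norm_lt_mul <|
    (mul_le_of_le_one_right (norm_nonneg T) ContinuousLinearMap.norm_id_le).trans_lt h

theorem pow_mem_resolventSet_of_opNorm_le (hn : n ≠ 0) (hr : 0 ≤ r) (hT : ‖T‖ ≤ r ^ n)
    (hz : r < ‖z‖) : z ^ n ∈ resolventSet ℂ T :=
  mem_resolventSet_of_opNorm_lt <|
    hT.trans_lt <| (pow_lt_pow_left₀ hz hr hn).trans_eq (norm_pow z n).symm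

theorem analyticAt_resolvent_pow (h : z ^ n ∈ resolventSet ℂ T) :
    AnalyticAt ℂ (fun w => resolvent T (w ^ n)) z :=
  AnalyticAt.fun_comp (f := fun w => w ^ n) (analyticAt_resolvent h) (by fun_prop)

theorem eventually_pow_mem_resolventSet (hn : n ≠ 0) (hr : 0 ≤ r) (hF : FinRank F)
    (hT : ‖T ^ n - F‖ ≤ r ^ n) (hz₀ : r < ‖z₀‖) :
    ∀ᶠ z in 𝓝[≠] z₀, z ^ n ∈ resolventSet ℂ (T ^ n) := by
  have hres (z : ℂ) (hz : z ∈ (closedBall (0 : ℂ) r)ᶜ) : z ^ n ∈ resolventSet ℂ (T ^ n - F) :=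
    pow_mem_resolventSet_of_opNorm_le hn hr hT (by simpa using hz)
  have hiff (z : ℂ) (hz : z ∈ (closedBall (0 : ℂ) r)ᶜ) :
      z ^ n ∈ resolventSet ℂ (T ^ n) ↔ IsUnit (1 - F * resolvent (T ^ n - F) (z ^ n)) := by
    rw [← mem_resolventSet_add_iff (hres z hz), sub_add_cancel]
  obtain ⟨w, hw⟩ := NormedField.exists_lt_norm ℂ (max r ‖T‖)
  have hwU : w ∈ (closedBall (0 : ℂ) r)ᶜ := by simpa using (le_max_left _ _).trans_lt hw
  have hwT : w ^ n ∈ resolventSet ℂ (T ^ n) :=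
    pow_mem_resolventSet_of_opNorm_le hn (norm_nonneg T) (norm_pow_le' T hn.bot_lt)
      ((le_max_right _ _).trans_lt hw)
  have hU : (closedBall (0 : ℂ) r)ᶜ ∈ 𝓝 z₀ :=
    isClosed_closedBall.isOpen_compl.mem_nhds (by simpa using hz₀)
  filter_upwards [nhdsWithin_le_nhds hU, hF.eventually_isUnit_one_sub_mul
    (fun z hz => analyticAt_resolvent_pow (hres z hz))
    (isPreconnected_compl_closedBall_zero (by simp) hr) hwU ((hiff w hwU).1 hwT)
    (mem_of_mem_nhds hU)] with z hzU hz
  exact (hiff z hzU).2 hz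

theorem finitelyMeromorphicAt_resolvent_pow (hF : FinRank F)
    (hz₀ : z₀ ^ n ∈ resolventSet ℂ (T - F)) (h : ∀ᶠ z in 𝓝[≠] z₀, z ^ n ∈ resolventSet ℂ T) :
    FinitelyMeromorphicAt (fun z => resolvent T (z ^ n)) z₀ := by
  have hK := analyticAt_resolvent_pow hz₀
  have hnear : ∀ᶠ z in 𝓝[≠] z₀, z ^ n ∈ resolventSet ℂ (T - F) := nhdsWithin_le_nhds <|
    (continuous_pow n).continuousAt.eventually ((spectrum.isOpen_resolventSet _).mem_nhds hz₀)
  have hunit : ∀ᶠ z in 𝓝[≠] z₀, IsUnit (1 - F * resolvent (T - F) (z ^ n)) := by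
    filter_upwards [h, hnear] with z hz hzF
    rwa [← mem_resolventSet_add_iff hzF, sub_add_cancel]
  refine ((hF.finitelyMeromorphicAt_ringInverse_one_sub_mul hK hunit).analyticAt_mul hK).congr ?_
  filter_upwards [hnear] with z hzF
  rw [← resolvent_add hzF, sub_add_cancel]

theorem FinRank.eventually_mem_resolventSet_and_finitelyMeromorphicAt (hF : FinRank F)
    (hn : n ≠ 0) (hr : 0 ≤ r) (hT : ‖T ^ n - F‖ ≤ r ^ n) (hz₀ : r < ‖z₀‖) :
    (∀ᶠ z in 𝓝[≠] z₀, z ∈ resolventSet ℂ T) ∧ FinitelyMeromorphicAt (resolvent T) z₀ := by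
  have hpow := eventually_pow_mem_resolventSet hn hr hF hT hz₀
  exact ⟨hpow.mono fun z => mem_resolventSet_of_pow_mem_resolventSet,
    finitelyMeromorphicAt_resolvent_of_pow (finitelyMeromorphicAt_resolvent_pow hF
      (pow_mem_resolventSet_of_opNorm_le hn hr hT hz₀) hpow) hpow⟩

theorem FinitelyMeromorphicAt.eventually_finRank_rieszProjection
    (h : FinitelyMeromorphicAt (resolvent T) z₀) :
    ∀ᶠ r in 𝓝[>] (0 : ℝ), FinRank (rieszProjection T z₀ r) :=
  h.eventually_finRank_circleIntegral.mono fun _ hr => hr.const_smul _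

end PowerNearFinRank

/-- Theorem 3.2 / `t:sepDiscrete`: if some power `T^{t1}` of a
bounded operator `T` on a complex Banach space is a norm limit of finite-rank
operators, then `T` has a discrete spectrum away from zero: in any compact set
`K ⊆ ℂ \ {0}` the spectrum is finite, consists of isolated points of the
spectrum, and each of these is a pole of finite multiplicity, i.e. the
associated Riesz projection has finite rank for all small enough radii. -/
theorem stmt6 {E : Type*} [NormedAddCommGroup E] [NormedSpace ℂ E]
    [CompleteSpace E] (T : E →L[ℂ] E) (t1 : ℕ) (ht1 : 1 ≤ t1)
    (hsep : ∀ ε : ℝ, 0 < ε → ∃ F : E →L[ℂ] E, FinRank F ∧ ‖T ^ t1 - F‖ ≤ ε) :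
    ∀ K : Set ℂ, IsCompact K → (0 : ℂ) ∉ K →
      (spectrum ℂ T ∩ K).Finite ∧
      ∀ z0 ∈ spectrum ℂ T ∩ K,
        (∃ ε1 : ℝ, 0 < ε1 ∧ spectrum ℂ T ∩ Metric.closedBall z0 ε1 = {z0}) ∧
        ∃ ε0 : ℝ, 0 < ε0 ∧ ∀ ε1 : ℝ, 0 < ε1 → ε1 ≤ ε0 →
          FinRank (rieszProjection T z0 ε1) := by
  intro K hK h0
  have hloc (z : ℂ) (hz : z ∈ K) :
      (∀ᶠ w in 𝓝[≠] z, w ∈ resolventSet ℂ T) ∧ FinitelyMeromorphicAt (resolvent T) z := by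
    have hz₀ : 0 < ‖z‖ := norm_pos_iff.2 (ne_of_mem_of_not_mem hz h0)
    obtain ⟨F, hF, hT⟩ := hsep ((‖z‖ / 2) ^ t1) (by positivity)
    exact hF.eventually_mem_resolventSet_and_finitelyMeromorphicAt
      (Nat.one_le_iff_ne_zero.1 ht1) (by positivity) hT (half_lt_self hz₀)
  have hdisc (z : ℂ) (hz : z ∈ K) : ∀ᶠ w in 𝓝[≠] z, w ∉ spectrum ℂ T :=
    (hloc z hz).1.mono fun w hw => not_not.2 hw
  refine ⟨finite_inter_of_forall_eventually_nhdsNE_notMem hK hdisc, fun z₀ hz₀ =>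
    ⟨exists_inter_closedBall_eq_singleton hz₀.1 (hdisc z₀ hz₀.2), ?_⟩⟩
  obtain ⟨ε₀, hε₀, hsub⟩ := mem_nhdsGT_iff_exists_Ioc_subset.1
    (hloc z₀ hz₀.2).2.eventually_finRank_rieszProjection
  exact ⟨ε₀, hε₀, fun ε hε hle => hsub ⟨hε, hle⟩⟩

end
end

section
/- Let N ≥ 1 and let φ : [0,1]^N → ℝ be continuously differentiable. For m ≥ 1 define the multivariate Bernstein polynomial φ_m(z) = Σ_{j_1=0}^m ⋯ Σ_{j_N=0}^m φ(j_1/m, …, j_N/m) ∏_{i=1}^N binom(m, j_i) z_i^{j_i} (1 − z_i)^{m − j_i}. Then φ_m → φ uniformly on [0,1]^N together with its first partial derivatives: lim_{m→∞} sup_{z∈[0,1]^N} |φ(z) − φ_m(z)| = 0 and, for every 1 ≤ i ≤ N, lim_{m→∞} sup_{z∈[0,1]^N} |∂φ/∂z_i (z) − ∂φ_m/∂z_i (z)| = 0. -/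
noncomputable section

/-- The multivariate Bernstein polynomial of order `m` associated with
`φ : [0,1]^N → ℝ`:
`φ_m(z) = Σ_{j} φ(j/m) ∏_i C(m, j_i) z_i^{j_i} (1 − z_i)^{m − j_i}`. -/
noncomputable def bernstein' {N : ℕ} (φ : (Fin N → ℝ) → ℝ) (m : ℕ)
    (z : Fin N → ℝ) : ℝ :=
  ∑ j : Fin N → Fin (m + 1),
    φ (fun i => ((j i : ℕ) : ℝ) / (m : ℝ)) *
      ∏ i, (m.choose (j i) : ℝ) * z i ^ (j i : ℕ) * (1 - z i) ^ (m - (j i : ℕ))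

/-- The unit cube `[0,1]^N`. -/
def unitCube (N : ℕ) : Set (Fin N → ℝ) :=
  Set.pi Set.univ fun _ : Fin N => Set.Icc (0 : ℝ) 1

/-!
At a fixed `z` the Bernstein basis polynomials of multidegree `n` are the weights of a product of
binomial distributions with mean `z`, whose variance is at most `∑ i, 1 / n i`. A continuous `g` on
the cube satisfies `|g x - g y| ≤ ε + C |x - y| ^ 2`, so averaging against these weights
coefficients that are uniformly close to the values of `g` at the nodes `j / n` approximates `g`
uniformly.

The `i`-th partial derivative of the Bernstein polynomial of `φ` has multidegree `n - eᵢ` and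
coefficients `n i * (φ ((j + eᵢ) / n) - φ (j / n))`. As the node `j / (n - eᵢ)` lies between `j / n`
and `(j + eᵢ) / n`, the mean value inequality makes these difference quotients uniformly close to
`∂ᵢφ` at the nodes, and the same convergence theorem applies.
-/

open Filter Finset

/-- A quadratic substitute for the modulus of continuity, suited to variance bounds. -/
theorem exists_dist_le_add_mul_dist_sq {X Y : Type*} [PseudoMetricSpace X] [PseudoMetricSpace Y]
    {K : Set X} (hK : IsCompact K) {g : X → Y} (hg : ContinuousOn g K) {ε : ℝ} (hε : 0 < ε) :
    ∃ C, 0 ≤ C ∧ ∀ x ∈ K, ∀ y ∈ K, dist (g x) (g y) ≤ ε + C * dist x y ^ 2 := by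
  obtain ⟨δ, hδ, hclose⟩ :=
    Metric.uniformContinuousOn_iff.1 (hK.uniformContinuousOn_of_continuous hg) ε hε
  set D := Metric.diam (g '' K)
  have hC : 0 ≤ D / δ ^ 2 := div_nonneg Metric.diam_nonneg (sq_nonneg δ)
  refine ⟨D / δ ^ 2, hC, fun x hx y hy => ?_⟩
  rcases lt_or_ge (dist x y) δ with hxy | hxy
  · linarith [hclose x hx y hy hxy, mul_nonneg hC (sq_nonneg (dist x y))]
  · calc dist (g x) (g y) ≤ D :=
          Metric.dist_le_diam_of_mem (hK.image_of_continuousOn hg).isBounded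
            (Set.mem_image_of_mem g hx) (Set.mem_image_of_mem g hy)
      _ = D / δ ^ 2 * δ ^ 2 := by field_simp
      _ ≤ D / δ ^ 2 * dist x y ^ 2 := by gcongr
      _ ≤ ε + D / δ ^ 2 * dist x y ^ 2 := by linarith

theorem dist_pi_sq_le_sum {ι : Type*} [Fintype ι] (x y : ι → ℝ) :
    dist x y ^ 2 ≤ ∑ i, (x i - y i) ^ 2 := by
  have hsum : 0 ≤ ∑ i, (x i - y i) ^ 2 := sum_nonneg fun _ _ => sq_nonneg _
  refine (Real.le_sqrt dist_nonneg hsum).1 ((dist_pi_le_iff (Real.sqrt_nonneg _)).2 fun i => ?_)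
  rw [Real.dist_eq]
  exact Real.abs_le_sqrt
    (single_le_sum (f := fun i => (x i - y i) ^ 2) (fun _ _ => sq_nonneg _) (mem_univ i))

theorem exists_forall_norm_sub_sub_fderivWithin_le {V W : Type*} [NormedAddCommGroup V]
    [NormedSpace ℝ V] [NormedAddCommGroup W] [NormedSpace ℝ W] {K : Set V} {φ : V → W}
    (hK : Convex ℝ K) (hφ : DifferentiableOn ℝ φ K)
    (hφ' : UniformContinuousOn (fderivWithin ℝ φ K) K) {ε : ℝ} (hε : 0 < ε) :
    ∃ δ > 0, ∀ c ∈ K, ∀ x ∈ K, ∀ y ∈ K, dist x c < δ → dist y c < δ →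
      ‖φ y - φ x - fderivWithin ℝ φ K c (y - x)‖ ≤ ε * ‖y - x‖ := by
  obtain ⟨δ, hδ, hclose⟩ := Metric.uniformContinuousOn_iff.1 hφ' ε hε
  refine ⟨δ, hδ, fun c hc x hx y hy hxc hyc => ?_⟩
  refine (hK.inter (convex_ball c δ)).norm_image_sub_le_of_norm_hasFDerivWithin_le'
    (f' := fderivWithin ℝ φ K) (fun w hw => ?_) (fun w hw => ?_) ⟨hx, hxc⟩ ⟨hy, hyc⟩
  · exact (hφ w hw.1).hasFDerivWithinAt.mono Set.inter_subset_left
  · rw [← dist_eq_norm]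
    exact (hclose w hw.1 c hc hw.2).le

theorem exists_forall_norm_fderivWithin_sub_slope_le {V W : Type*} [NormedAddCommGroup V]
    [NormedSpace ℝ V] [NormedAddCommGroup W] [NormedSpace ℝ W] {K : Set V} {φ : V → W}
    (hK : Convex ℝ K) (hφ : DifferentiableOn ℝ φ K)
    (hφ' : UniformContinuousOn (fderivWithin ℝ φ K) K) {ε : ℝ} (hε : 0 < ε) :
    ∃ δ > 0, ∀ c ∈ K, ∀ x ∈ K, ∀ v, ∀ t ≠ (0 : ℝ), x + t • v ∈ K → dist x c < δ →
      dist (x + t • v) c < δ →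
      ‖fderivWithin ℝ φ K c v - t⁻¹ • (φ (x + t • v) - φ x)‖ ≤ ε * ‖v‖ := by
  obtain ⟨δ, hδ, hstrict⟩ := exists_forall_norm_sub_sub_fderivWithin_le hK hφ hφ' hε
  refine ⟨δ, hδ, fun c hc x hx v t ht hy hxc hyc => ?_⟩
  set L := fderivWithin ℝ φ K c
  have hincr := hstrict c hc x hx _ hy hxc hyc
  rw [add_sub_cancel_left, map_smul, norm_smul t v] at hincr
  have hscale : L v - t⁻¹ • (φ (x + t • v) - φ x) =
      -(t⁻¹ • (φ (x + t • v) - φ x - t • L v)) := by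
    rw [smul_sub t⁻¹ _ (t • L v), inv_smul_smul₀ ht, neg_sub]
  rw [hscale, norm_neg, norm_smul, norm_inv, inv_mul_le_iff₀ (norm_pos_iff.2 ht)]
  exact hincr.trans_eq (mul_left_comm _ _ _)

theorem uniqueDiffOn_Icc_pi {ι : Type*} {a b : ι → ℝ} (hab : ∀ i, a i < b i) :
    UniqueDiffOn ℝ (Set.Icc a b) := by
  rw [← Set.pi_univ_Icc]
  exact UniqueDiffOn.univ_pi fun i => uniqueDiffOn_Icc (hab i)

theorem tendsto_apply_atTop {ι α : Type*} [Preorder α] (i : ι) :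
    Tendsto (fun f : ι → α => f i) atTop atTop :=
  tendsto_atTop.2 fun b => (eventually_ge_atTop fun _ => b).mono fun _ hf => hf i

theorem tendsto_sub_const_atTop {α : Type*} [AddCommMonoid α] [PartialOrder α] [Sub α]
    [OrderedSub α] [IsOrderedCancelAddMonoid α] (b : α) :
    Tendsto (fun a : α => a - b) atTop atTop :=
  tendsto_atTop.2 fun c =>
    (eventually_ge_atTop (c + b)).mono fun _ ha => le_tsub_of_add_le_right ha

theorem sum_Iic_prod {ι R : Type*} [Fintype ι] [DecidableEq ι] [CommSemiring R] (n : ι → ℕ)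
    (f : ι → ℕ → R) :
    ∑ j ∈ Iic n, ∏ i, f i (j i) = ∏ i, ∑ k ∈ Iic (n i), f i k :=
  (prod_univ_sum _ _).symm

theorem pi_single_one_le_iff {ι : Type*} [DecidableEq ι] {j : ι → ℕ} {i : ι} :
    Pi.single i 1 ≤ j ↔ j i ≠ 0 := by
  refine ⟨fun h => Nat.one_le_iff_ne_zero.1 (by simpa using h i), fun h l => ?_⟩
  rcases eq_or_ne l i with rfl | hl
  · simpa using Nat.one_le_iff_ne_zero.2 h
  · simp [hl]

theorem div_le_div_pred {k n : ℕ} (hk : k ≤ n - 1) : (k : ℝ) / n ≤ k / (n - 1 : ℕ) := by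
  rcases Nat.eq_zero_or_pos (n - 1) with h | h
  · simp [show k = 0 by omega]
  · gcongr
    omega

theorem div_pred_le_succ_div {k n : ℕ} (hk : k ≤ n - 1) :
    (k : ℝ) / (n - 1 : ℕ) ≤ (k + 1) / n := by
  rcases n with _ | _ | m
  · simp
  · simp [show k = 0 by simpa using hk]
  · rw [Nat.add_sub_cancel, div_le_div_iff₀ (by positivity) (by positivity)]
    have hk' : k ≤ m + 1 := hk
    norm_cast
    nlinarith

theorem eval_bernsteinPolynomial_nonneg (n k : ℕ) {x : ℝ} (hx : x ∈ Set.Icc (0 : ℝ) 1) :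
    0 ≤ (bernsteinPolynomial ℝ n k).eval x :=
  bernstein_nonneg (x := ⟨x, hx⟩)

theorem sum_eval_bernsteinPolynomial (n : ℕ) (x : ℝ) :
    ∑ k ∈ Iic n, (bernsteinPolynomial ℝ n k).eval x = 1 := by
  rw [← Nat.range_succ_eq_Iic, ← Polynomial.eval_finsetSum, bernsteinPolynomial.sum,
    Polynomial.eval_one]

theorem sum_eval_bernsteinPolynomial_mul_sq_le {n : ℕ} (hn : n ≠ 0) {x : ℝ}
    (hx : x ∈ Set.Icc (0 : ℝ) 1) :
    ∑ k ∈ Iic n, (bernsteinPolynomial ℝ n k).eval x * (x - k / n) ^ 2 ≤ 1 / n := by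
  have hvar : ∑ k ∈ Iic n, (bernsteinPolynomial ℝ n k).eval x * (x - k / n) ^ 2 =
      x * (1 - x) / n := by
    rw [← bernstein.variance hn ⟨x, hx⟩, ← Nat.range_succ_eq_Iic, sum_range]
    exact sum_congr rfl fun k _ => mul_comm _ _
  rw [hvar]
  gcongr
  nlinarith [hx.1, hx.2]

/-- The grid point `j / n` of `[0,1]^ι`; its `i`-th coordinate is `0` where `n i = 0`. -/
def bernsteinNode {ι : Type*} (n j : ι → ℕ) : ι → ℝ :=
  fun i => j i / n i

theorem bernsteinNode_mem_Icc {ι : Type*} {n j : ι → ℕ} (hj : j ≤ n) :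
    bernsteinNode n j ∈ Set.Icc (0 : ι → ℝ) 1 :=
  ⟨fun _ => by simp only [bernsteinNode, Pi.zero_apply]; positivity,
    fun i => div_le_one_of_le₀ (Nat.cast_le.2 (hj i)) (Nat.cast_nonneg _)⟩

theorem bernsteinNode_add_single {ι : Type*} [DecidableEq ι] (n j : ι → ℕ) (i : ι) :
    bernsteinNode n (j + Pi.single i 1) = bernsteinNode n j + (n i : ℝ)⁻¹ • Pi.single i 1 := by
  ext l
  rcases eq_or_ne l i with rfl | hl
  · simp [bernsteinNode, add_div]
  · simp [bernsteinNode, hl]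

section MultivariateBernstein

variable {ι : Type*} [Fintype ι]

/-- The Bernstein basis polynomial of multidegree `n` and index `j` on `[0,1]^ι`, a product of
one-variable Bernstein polynomials. It vanishes unless `j ≤ n`. -/
def bernsteinBasis (n j : ι → ℕ) (z : ι → ℝ) : ℝ :=
  ∏ i, (bernsteinPolynomial ℝ (n i) (j i)).eval (z i)

theorem bernsteinBasis_nonneg (n j : ι → ℕ) {z : ι → ℝ} (hz : z ∈ Set.Icc (0 : ι → ℝ) 1) :
    0 ≤ bernsteinBasis n j z :=
  prod_nonneg fun i _ => eval_bernsteinPolynomial_nonneg _ _ ⟨hz.1 i, hz.2 i⟩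

theorem bernsteinBasis_eq_zero_of_not_le {n j : ι → ℕ} (hj : ¬ j ≤ n) (z : ι → ℝ) :
    bernsteinBasis n j z = 0 := by
  obtain ⟨i, hi⟩ := not_forall.1 hj
  refine prod_eq_zero (mem_univ i) ?_
  rw [bernsteinPolynomial.eq_zero_of_lt ℝ (not_le.1 hi), Polynomial.eval_zero]

theorem differentiable_bernsteinBasis (n j : ι → ℕ) : Differentiable ℝ (bernsteinBasis n j) := by
  unfold bernsteinBasis
  fun_prop

variable [DecidableEq ι]

/-- The node `j / (n - eᵢ)` lies on the segment from `j / n` to `(j + eᵢ) / n`. -/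
theorem dist_bernsteinNode_sub_single_le {n j : ι → ℕ} {i : ι} (hj : j ≤ n - Pi.single i 1) :
    dist (bernsteinNode n j) (bernsteinNode (n - Pi.single i 1) j) ≤ 1 / n i ∧
      dist (bernsteinNode n (j + Pi.single i 1)) (bernsteinNode (n - Pi.single i 1) j) ≤
        1 / n i := by
  have hji : j i ≤ n i - 1 := by simpa using hj i
  have hlower := div_le_div_pred hji
  have hupper := div_pred_le_succ_div hji
  rw [add_div] at hupper
  constructor <;> refine (dist_pi_le_iff (by positivity)).2 fun l => ?_ <;>
    rcases eq_or_ne l i with rfl | hl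
  · simp only [bernsteinNode, Pi.sub_apply, Pi.single_eq_same, Real.dist_eq, abs_le]
    constructor <;> linarith
  · simp [bernsteinNode, hl]
  · simp only [bernsteinNode, Pi.sub_apply, Pi.add_apply, Pi.single_eq_same, Real.dist_eq, abs_le,
      Nat.cast_add, Nat.cast_one, add_div]
    constructor <;> linarith
  · simp [bernsteinNode, hl]

theorem sum_bernsteinBasis (n : ι → ℕ) (z : ι → ℝ) :
    ∑ j ∈ Iic n, bernsteinBasis n j z = 1 := by
  simp only [bernsteinBasis,
    sum_Iic_prod n fun i k => (bernsteinPolynomial ℝ (n i) k).eval (z i),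
    sum_eval_bernsteinPolynomial, prod_const_one]

theorem sum_bernsteinBasis_mul_apply (n : ι → ℕ) (z : ι → ℝ) (i : ι) (h : ℕ → ℝ) :
    ∑ j ∈ Iic n, bernsteinBasis n j z * h (j i) =
      ∑ k ∈ Iic (n i), (bernsteinPolynomial ℝ (n i) k).eval (z i) * h k := by
  have hprod := sum_Iic_prod n fun l k =>
    (bernsteinPolynomial ℝ (n l) k).eval (z l) * if l = i then h k else 1
  simp only [prod_mul_distrib, prod_ite_eq', mem_univ, if_true] at hprod
  simp only [bernsteinBasis, hprod]
  rw [prod_eq_single i (fun l _ hl => by simp [hl, sum_eval_bernsteinPolynomial]) (by simp)]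
  simp

theorem sum_bernsteinBasis_mul_dist_sq_le {n : ι → ℕ} (hn : ∀ i, n i ≠ 0) {z : ι → ℝ}
    (hz : z ∈ Set.Icc (0 : ι → ℝ) 1) :
    ∑ j ∈ Iic n, bernsteinBasis n j z * dist z (bernsteinNode n j) ^ 2 ≤
      ∑ i, 1 / (n i : ℝ) :=
  calc ∑ j ∈ Iic n, bernsteinBasis n j z * dist z (bernsteinNode n j) ^ 2
    _ ≤ ∑ j ∈ Iic n, bernsteinBasis n j z * ∑ i, (z i - j i / n i) ^ 2 :=
        sum_le_sum fun j _ =>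
          mul_le_mul_of_nonneg_left (dist_pi_sq_le_sum _ _) (bernsteinBasis_nonneg n j hz)
    _ = ∑ i, ∑ j ∈ Iic n, bernsteinBasis n j z * (z i - j i / n i) ^ 2 := by
        simp only [mul_sum]
        exact sum_comm
    _ ≤ ∑ i, 1 / (n i : ℝ) := sum_le_sum fun i _ => by
        rw [sum_bernsteinBasis_mul_apply n z i fun k => (z i - k / n i) ^ 2]
        exact sum_eval_bernsteinPolynomial_mul_sq_le (hn i) ⟨hz.1 i, hz.2 i⟩

theorem fderiv_bernsteinBasis_single (n j : ι → ℕ) (z : ι → ℝ) (i : ι) :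
    fderiv ℝ (bernsteinBasis n j) z (Pi.single i 1) =
      (bernsteinPolynomial ℝ (n i) (j i)).derivative.eval (z i) *
        ∏ l ∈ univ.erase i, (bernsteinPolynomial ℝ (n l) (j l)).eval (z l) := by
  have hfactor (l : ι) := ((bernsteinPolynomial ℝ (n l) (j l)).hasDerivAt (z l)).comp_hasFDerivAt z
    (ContinuousLinearMap.proj (R := ℝ) (φ := fun _ : ι => ℝ) l).hasFDerivAt
  have hprod : HasFDerivAt (bernsteinBasis n j) _ z :=
    HasFDerivAt.finsetProd fun l _ => hfactor l
  rw [hprod.fderiv]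
  simp [Pi.single_apply, mul_comm]

theorem bernsteinBasis_sub_single {n j j' : ι → ℕ} {i : ι} (hj : ∀ l ≠ i, j' l = j l)
    (z : ι → ℝ) :
    bernsteinBasis (n - Pi.single i 1) j' z =
      (bernsteinPolynomial ℝ (n i - 1) (j' i)).eval (z i) *
        ∏ l ∈ univ.erase i, (bernsteinPolynomial ℝ (n l) (j l)).eval (z l) := by
  rw [bernsteinBasis, ← mul_prod_erase _ _ (mem_univ i)]
  congr 1
  · simp
  · refine prod_congr rfl fun l hl => ?_
    have hli := ne_of_mem_erase hl
    simp [hli, hj l hli]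

theorem fderiv_bernsteinBasis_single_eq_sub (n j : ι → ℕ) (z : ι → ℝ) (i : ι) :
    fderiv ℝ (bernsteinBasis n j) z (Pi.single i 1) =
      n i * ((if j i = 0 then 0 else
          bernsteinBasis (n - Pi.single i 1) (j - Pi.single i 1) z) -
        bernsteinBasis (n - Pi.single i 1) j z) := by
  rw [fderiv_bernsteinBasis_single, bernsteinBasis_sub_single (j := j) (fun _ _ => rfl),
    bernsteinBasis_sub_single (j := j) (fun l hl => by simp [hl])]
  simp only [Pi.sub_apply, Pi.single_eq_same]
  rcases j i with _ | k
  · simp [bernsteinPolynomial.derivative_zero, mul_assoc]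
  · simp [bernsteinPolynomial.derivative_succ, mul_assoc, sub_mul]

variable {E : Type*} [NormedAddCommGroup E] [NormedSpace ℝ E]

/-- The polynomial of multidegree `n` with coefficients `a j`, `j ≤ n`, in the Bernstein basis.
The coefficients are arbitrary rather than samples of a function, so that partial derivatives are
again of this form. -/
def bernsteinForm (n : ι → ℕ) (a : (ι → ℕ) → E) (z : ι → ℝ) : E :=
  ∑ j ∈ Iic n, bernsteinBasis n j z • a j

/-- The multivariate Bernstein approximation of `φ` of multidegree `n`. -/
def bernsteinApprox (n : ι → ℕ) (φ : (ι → ℝ) → E) : (ι → ℝ) → E :=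
  bernsteinForm n fun j => φ (bernsteinNode n j)

theorem sum_bernsteinBasis_sub_single_smul (n : ι → ℕ) (i : ι) (z : ι → ℝ)
    (a : (ι → ℕ) → E) :
    ∑ j ∈ Iic n, bernsteinBasis (n - Pi.single i 1) j z • a j =
      bernsteinForm (n - Pi.single i 1) a z := by
  refine (sum_subset (Iic_subset_Iic.2 tsub_le_self) fun j _ hj => ?_).symm
  rw [bernsteinBasis_eq_zero_of_not_le (by simpa using hj), zero_smul]

theorem sum_shift_bernsteinBasis_sub_single_smul {n : ι → ℕ} {i : ι} (hi : n i ≠ 0) (z : ι → ℝ)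
    (a : (ι → ℕ) → E) :
    ∑ j ∈ Iic n, (if j i = 0 then 0 else
        bernsteinBasis (n - Pi.single i 1) (j - Pi.single i 1) z) • a j =
      bernsteinForm (n - Pi.single i 1) (fun j => a (j + Pi.single i 1)) z := by
  have hn : n - Pi.single i 1 + Pi.single i 1 = n :=
    tsub_add_cancel_of_le (pi_single_one_le_iff.2 hi)
  have hcancel {j : ι → ℕ} (hj : j ∈ (Iic n).filter (¬ · i = 0)) :
      j - Pi.single i 1 + Pi.single i 1 = j :=
    tsub_add_cancel_of_le (pi_single_one_le_iff.2 (mem_filter.1 hj).2)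
  simp only [ite_smul, zero_smul, sum_ite, sum_const_zero, zero_add]
  refine sum_nbij' (· - Pi.single i 1) (· + Pi.single i 1) (fun j hj => ?_) (fun j hj => ?_)
    (fun j hj => hcancel hj) (fun j _ => add_tsub_cancel_right _ _)
    (fun j hj => by simp only [hcancel hj])
  · exact mem_Iic.2
      (tsub_le_tsub_right (mem_Iic.1 (mem_filter.1 hj).1) _)
  · have hle : j + Pi.single i 1 ≤ n := hn ▸ add_le_add_left (mem_Iic.1 hj) _
    simpa using hle

theorem fderiv_bernsteinForm_single (n : ι → ℕ) (a : (ι → ℕ) → E) (z : ι → ℝ) (i : ι) :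
    fderiv ℝ (bernsteinForm n a) z (Pi.single i 1) =
      bernsteinForm (n - Pi.single i 1)
        (fun j => (n i : ℝ) • (a (j + Pi.single i 1) - a j)) z := by
  have hterm : HasFDerivAt (bernsteinForm n a) _ z := HasFDerivAt.fun_sum fun j _ =>
    (differentiable_bernsteinBasis n j z).hasFDerivAt.smul_const (a j)
  have hderiv : fderiv ℝ (bernsteinForm n a) z (Pi.single i 1) =
      ∑ j ∈ Iic n, fderiv ℝ (bernsteinBasis n j) z (Pi.single i 1) • a j := by
    simp [hterm.fderiv]
  rw [hderiv]
  simp only [fderiv_bernsteinBasis_single_eq_sub, mul_smul, ← smul_sum, sub_smul, sum_sub_distrib]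
  rcases eq_or_ne (n i) 0 with hi | hi
  · simp [hi, bernsteinForm]
  · rw [sum_bernsteinBasis_sub_single_smul, sum_shift_bernsteinBasis_sub_single_smul hi]
    simp only [bernsteinForm, smul_sub, sum_sub_distrib, smul_sum, smul_comm (n i : ℝ)]

theorem norm_sub_bernsteinForm_le (n : ι → ℕ) (a : (ι → ℕ) → E) (c : E) {z : ι → ℝ}
    (hz : z ∈ Set.Icc (0 : ι → ℝ) 1) :
    ‖c - bernsteinForm n a z‖ ≤ ∑ j ∈ Iic n, bernsteinBasis n j z * ‖c - a j‖ := by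
  have havg : c - bernsteinForm n a z = ∑ j ∈ Iic n, bernsteinBasis n j z • (c - a j) := by
    simp only [smul_sub, sum_sub_distrib, ← sum_smul, sum_bernsteinBasis, one_smul, bernsteinForm]
  rw [havg]
  refine norm_sum_le_of_le _ fun j _ => ?_
  rw [norm_smul, Real.norm_of_nonneg (bernsteinBasis_nonneg n j hz)]

/-- The coefficients `a t j` need only be asymptotically the values of `g` at the nodes: this covers
both the sampled coefficients of `bernsteinApprox` and the difference quotients that appear in its
derivative. -/
theorem tendstoUniformlyOn_bernsteinForm {α : Type*} {l : Filter α} {n : α → ι → ℕ}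
    {a : α → (ι → ℕ) → E} {g : (ι → ℝ) → E} (hg : ContinuousOn g (Set.Icc 0 1))
    (hn : Tendsto n l atTop)
    (ha : ∀ ε > 0, ∀ᶠ t in l, ∀ j ≤ n t, ‖g (bernsteinNode (n t) j) - a t j‖ ≤ ε) :
    TendstoUniformlyOn (fun t => bernsteinForm (n t) (a t)) g l (Set.Icc 0 1) := by
  rw [Metric.tendstoUniformlyOn_iff]
  intro ε hε
  have hε₃ : 0 < ε / 3 := by positivity
  obtain ⟨C, hC, hquad⟩ := exists_dist_le_add_mul_dist_sq isCompact_Icc hg hε₃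
  have hcoord (i : ι) : Tendsto (fun t => n t i) l atTop := (tendsto_apply_atTop i).comp hn
  have hvar : Tendsto (fun t => C * ∑ i, 1 / (n t i : ℝ)) l (nhds 0) := by
    simpa using (tendsto_finsetSum univ fun i _ =>
      tendsto_one_div_atTop_nhds_zero_nat (𝕜 := ℝ).comp (hcoord i)).const_mul C
  filter_upwards [ha (ε / 3) hε₃, hvar.eventually_lt_const hε₃,
    eventually_all.2 fun i => (hcoord i).eventually_ne_atTop 0] with t hat hvart hnt z hz
  have hcoeff : ∀ j ≤ n t,
      ‖g z - a t j‖ ≤ 2 * (ε / 3) + C * dist z (bernsteinNode (n t) j) ^ 2 := fun j hj => by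
    have htri := norm_sub_le_norm_sub_add_norm_sub (g z) (g (bernsteinNode (n t) j)) (a t j)
    have hgz := hquad z hz _ (bernsteinNode_mem_Icc hj)
    rw [dist_eq_norm] at hgz
    linarith [hat j hj]
  calc dist (g z) (bernsteinForm (n t) (a t) z)
    _ ≤ ∑ j ∈ Iic (n t), bernsteinBasis (n t) j z * ‖g z - a t j‖ :=
        dist_eq_norm (g z) _ ▸ norm_sub_bernsteinForm_le _ _ _ hz
    _ ≤ ∑ j ∈ Iic (n t), bernsteinBasis (n t) j z *
          (2 * (ε / 3) + C * dist z (bernsteinNode (n t) j) ^ 2) :=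
        sum_le_sum fun j hj => mul_le_mul_of_nonneg_left (hcoeff j (mem_Iic.1 hj))
          (bernsteinBasis_nonneg _ _ hz)
    _ = 2 * (ε / 3) + C * ∑ j ∈ Iic (n t),
          bernsteinBasis (n t) j z * dist z (bernsteinNode (n t) j) ^ 2 := by
        simp only [mul_add, sum_add_distrib, ← sum_mul, sum_bernsteinBasis, one_mul, mul_sum,
          mul_left_comm]
    _ ≤ 2 * (ε / 3) + C * ∑ i, 1 / (n t i : ℝ) := by
        gcongr
        exact sum_bernsteinBasis_mul_dist_sq_le hnt hz
    _ < ε := by linarith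

theorem tendstoUniformlyOn_bernsteinApprox {φ : (ι → ℝ) → E} (hφ : ContinuousOn φ (Set.Icc 0 1)) :
    TendstoUniformlyOn (fun n => bernsteinApprox n φ) φ atTop (Set.Icc 0 1) :=
  tendstoUniformlyOn_bernsteinForm hφ tendsto_id fun ε hε =>
    Eventually.of_forall fun n j _ => by simpa using hε.le

theorem eventually_norm_fderivWithin_sub_slope_le {φ : (ι → ℝ) → E}
    (hφ : ContDiffOn ℝ 1 φ (Set.Icc 0 1)) (i : ι) {ε : ℝ} (hε : 0 < ε) :
    ∀ᶠ n in atTop, ∀ j ≤ n - Pi.single i 1,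
      ‖fderivWithin ℝ φ (Set.Icc 0 1) (bernsteinNode (n - Pi.single i 1) j) (Pi.single i 1) -
        (n i : ℝ) • (φ (bernsteinNode n (j + Pi.single i 1)) - φ (bernsteinNode n j))‖ ≤ ε := by
  have hcont := hφ.continuousOn_fderivWithin
    (uniqueDiffOn_Icc_pi fun _ => zero_lt_one) le_rfl
  obtain ⟨δ, hδ, hslope⟩ := exists_forall_norm_fderivWithin_sub_slope_le (convex_Icc 0 1)
    (hφ.differentiableOn one_ne_zero) (isCompact_Icc.uniformContinuousOn_of_continuous hcont) hε
  have hmesh : Tendsto (fun n : ι → ℕ => 1 / (n i : ℝ)) atTop (nhds 0) :=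
    tendsto_one_div_atTop_nhds_zero_nat.comp (tendsto_apply_atTop i)
  filter_upwards [hmesh.eventually_lt_const hδ, (tendsto_apply_atTop i).eventually_ne_atTop 0]
    with n hnδ hni j hj
  have hmem := bernsteinNode_mem_Icc
    (add_le_of_le_tsub_right_of_le (pi_single_one_le_iff.2 hni) hj)
  obtain ⟨hdist, hdist'⟩ := dist_bernsteinNode_sub_single_le hj
  rw [bernsteinNode_add_single] at hmem hdist' ⊢
  simpa [Pi.norm_single] using hslope _ (bernsteinNode_mem_Icc hj) _
    (bernsteinNode_mem_Icc (hj.trans tsub_le_self)) _ _ (inv_ne_zero (Nat.cast_ne_zero.2 hni)) hmem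
    (hdist.trans_lt hnδ) (hdist'.trans_lt hnδ)

theorem tendstoUniformlyOn_fderiv_bernsteinApprox {φ : (ι → ℝ) → E}
    (hφ : ContDiffOn ℝ 1 φ (Set.Icc 0 1)) (i : ι) :
    TendstoUniformlyOn (fun n z => fderiv ℝ (bernsteinApprox n φ) z (Pi.single i 1))
      (fun z => fderivWithin ℝ φ (Set.Icc 0 1) z (Pi.single i 1)) atTop (Set.Icc 0 1) := by
  have hcont := hφ.continuousOn_fderivWithin
    (uniqueDiffOn_Icc_pi fun _ => zero_lt_one) le_rfl
  simp only [bernsteinApprox, fderiv_bernsteinForm_single]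
  exact tendstoUniformlyOn_bernsteinForm (hcont.clm_apply continuousOn_const)
    (tendsto_sub_const_atTop _) fun ε hε => eventually_norm_fderivWithin_sub_slope_le hφ i hε

theorem stmt7_general (φ : (ι → ℝ) → E) (hφ : ContDiffOn ℝ 1 φ (Set.Icc 0 1)) :
    ∀ ε : ℝ, 0 < ε → ∃ M : ℕ, ∀ n : ι → ℕ, (∀ i, M ≤ n i) → ∀ z ∈ Set.Icc (0 : ι → ℝ) 1,
      ‖φ z - bernsteinApprox n φ z‖ ≤ ε ∧
      ∀ i, ‖fderivWithin ℝ φ (Set.Icc 0 1) z (Pi.single i 1) -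
        fderiv ℝ (bernsteinApprox n φ) z (Pi.single i 1)‖ ≤ ε := by
  intro ε hε
  have hvalue := Metric.tendstoUniformlyOn_iff.1
    (tendstoUniformlyOn_bernsteinApprox hφ.continuousOn) ε hε
  have hpartial := eventually_all.2 fun i =>
    Metric.tendstoUniformlyOn_iff.1 (tendstoUniformlyOn_fderiv_bernsteinApprox hφ i) ε hε
  obtain ⟨n₀, hn₀⟩ := eventually_atTop.1 (hvalue.and hpartial)
  refine ⟨univ.sup n₀, fun n hn z hz => ?_⟩
  obtain ⟨hφz, hφ'z⟩ := hn₀ n fun i => (le_sup (mem_univ i)).trans (hn i)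
  simp only [← dist_eq_norm]
  exact ⟨(hφz z hz).le, fun i => (hφ'z i z hz).le⟩

end MultivariateBernstein

theorem bernstein'_eq_bernsteinApprox {N : ℕ} (φ : (Fin N → ℝ) → ℝ) (m : ℕ) :
    bernstein' φ m = bernsteinApprox (fun _ => m) φ := by
  ext z
  refine sum_nbij (fun j i => (j i : ℕ)) (fun j _ => ?_) (fun j _ j' _ h => ?_) (fun j hj => ?_)
    (fun j _ => ?_)
  · exact mem_Iic.2 fun i => (j i).is_le
  · exact funext fun i => Fin.ext (congrFun h i)
  · exact ⟨fun i => ⟨j i, Nat.lt_succ_of_le (mem_Iic.1 hj i)⟩, by simp, rfl⟩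
  · refine (mul_comm _ _).trans (congrArg (· * φ _) ?_)
    simp [bernsteinBasis, bernsteinPolynomial]

/-- Lemma 3.3 / `t:bernie`: for a `C¹` function
`φ : [0,1]^N → ℝ` (i.e. `C¹` on an open neighbourhood of the cube), the
Bernstein polynomials `φ_m` converge to `φ` uniformly on `[0,1]^N`, together
with all first partial derivatives. -/
theorem stmt7 {N : ℕ} (hN : 1 ≤ N) (φ : (Fin N → ℝ) → ℝ)
    (U : Set (Fin N → ℝ)) (hU : IsOpen U) (hUcube : unitCube N ⊆ U)
    (hφ : ContDiffOn ℝ 1 φ U) :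
    ∀ ε : ℝ, 0 < ε → ∃ M : ℕ, 1 ≤ M ∧ ∀ m : ℕ, M ≤ m →
      ∀ z ∈ unitCube N,
        |φ z - bernstein' φ m z| ≤ ε ∧
        ∀ i : Fin N,
          |fderiv ℝ φ z (Pi.single i 1) -
            fderiv ℝ (bernstein' φ m) z (Pi.single i 1)| ≤ ε := by
  intro ε hε
  have hcube : unitCube N = Set.Icc 0 1 := Set.pi_univ_Icc 0 1
  rw [hcube] at hUcube ⊢
  obtain ⟨M, hM⟩ := stmt7_general φ (hφ.mono hUcube) ε hε
  refine ⟨M + 1, Nat.le_add_left 1 M, fun m hm z hz => ?_⟩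
  have hderiv : fderivWithin ℝ φ (Set.Icc 0 1) z = fderiv ℝ φ z :=
    ((hφ.contDiffAt (hU.mem_nhds (hUcube hz))).differentiableAt one_ne_zero).fderivWithin
      (uniqueDiffOn_Icc_pi (fun _ => zero_lt_one) z hz)
  rw [bernstein'_eq_bernsteinApprox, ← hderiv]
  exact hM (fun _ => m) (fun _ => (Nat.le_succ M).trans hm) z hz

end
end

section
/- Under Assumptions (A1)–(A4), fix t ≥ 1 and suppose in addition that: P^t is separable in L_v^∞ (for every ε > 0 there exist finitely many s_i ∈ L_v^∞ and finite signed measures ν_i with ‖ν_i‖_v < ∞ such that sup{‖P^t f − Σ s_i ν_i(f)‖_v : ‖f‖_v ≤ 1} ≤ ε); and each component kernel Q^t_{i,j} (1 ≤ i,j ≤ ℓ) is separable in L_v^∞ in the same sense. Then the kernels can be approximated by their two-sided truncations: lim_{n→∞} sup{ ‖P^t f − χ_n · P^t(χ_n f)‖_{v,1} : f ∈ L_v^1, ‖f‖_{v,1} ≤ 1 } = 0, and for each 1 ≤ i,j ≤ ℓ, lim_{n→∞} sup{ ‖Q^t_{i,j} g − χ_n · Q^t_{i,j}(χ_n g)‖_v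 : g measurable, ‖g‖_v ≤ 1 } = 0. -/
open MeasureTheory Filter
open scoped ENNReal

noncomputable section

/-- Partial derivative `∂ᵢ f` of a function on `ℝ^ℓ`. -/
noncomputable def pd {ℓ : ℕ} (i : Fin ℓ) (f : (Fin ℓ → ℝ) → ℝ) (x : Fin ℓ → ℝ) : ℝ :=
  fderiv ℝ f x (Pi.single i 1)

/-- Weighted sup norm `‖f‖_w`. -/
noncomputable def wnorm {ℓ : ℕ} (w f : (Fin ℓ → ℝ) → ℝ) : ℝ := ⨆ x, |f x| / w x

/-- Weighted Sobolev norm `‖f‖_{w,1}`. -/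
noncomputable def wnorm1 {ℓ : ℕ} (w f : (Fin ℓ → ℝ) → ℝ) : ℝ :=
  max (wnorm w f) (⨆ i : Fin ℓ, wnorm w (pd i f))

/-- Membership in `L_w^0`: continuous with finite `w`-norm. -/
def MemLw0 {ℓ : ℕ} (w f : (Fin ℓ → ℝ) → ℝ) : Prop :=
  Continuous f ∧ ∃ M : ℝ, ∀ x, |f x| ≤ M * w x

/-- Membership in the weighted Sobolev space `L_w^1`. -/
def MemLw1 {ℓ : ℕ} (w f : (Fin ℓ → ℝ) → ℝ) : Prop :=
  ContDiff ℝ 1 f ∧ (∃ M : ℝ, ∀ x, |f x| ≤ M * w x) ∧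
    ∀ i : Fin ℓ, ∃ M : ℝ, ∀ x, |pd i f x| ≤ M * w x

/-- One-step transition operator of the model `X(t+1) = a(X(t), N(t+1))`,
`Pf(x) = E[f(a(x,N))]`, where `μ` is the common law of the i.i.d. noise. -/
noncomputable def Pstep {ℓ m : ℕ} (μ : Measure (Fin m → ℝ))
    (a : (Fin ℓ → ℝ) → (Fin m → ℝ) → (Fin ℓ → ℝ))
    (f : (Fin ℓ → ℝ) → ℝ) (x : Fin ℓ → ℝ) : ℝ :=
  ∫ n, f (a x n) ∂μ

/-- `t`-step transition operator: `Pt t f x = E_x[f(X(t))]`. -/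
noncomputable def Pt {ℓ m : ℕ} (μ : Measure (Fin m → ℝ))
    (a : (Fin ℓ → ℝ) → (Fin m → ℝ) → (Fin ℓ → ℝ)) :
    ℕ → ((Fin ℓ → ℝ) → ℝ) → (Fin ℓ → ℝ) → ℝ
  | 0 => fun f => f
  | t + 1 => fun f => Pstep μ a (Pt μ a t f)

/-- The semigroup `Q^t` defined through the sensitivity process:
`Q^t g (x) = E_x[S(t)ᵀ g(X(t))]` with `S(0) = I`, `S(t+1) = A(t+1) S(t)`,
`A(t)ᵀ = ∇ₓ a(X(t-1), N(t))`.  Equivalently (by the Markov property and the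
chain rule) it satisfies the recursion
`Q^{t+1} g (x) = ∫ ∇ₓa(x,n) · (Q^t g)(a(x,n)) μ(dn)`. -/
noncomputable def Qt {ℓ m : ℕ} (μ : Measure (Fin m → ℝ))
    (a : (Fin ℓ → ℝ) → (Fin m → ℝ) → (Fin ℓ → ℝ)) :
    ℕ → ((Fin ℓ → ℝ) → (Fin ℓ → ℝ)) → (Fin ℓ → ℝ) → (Fin ℓ → ℝ)
  | 0 => fun g => g
  | t + 1 => fun g x i =>
      ∫ n, (∑ j, fderiv ℝ (fun z => a z n) x (Pi.single i 1) j *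
        Qt μ a t g (a x n) j) ∂μ

/-- Component kernels `Q^t_{i,j} h (x) = E_x[S_{j,i}(t) h(X(t))]`. -/
noncomputable def Qtij {ℓ m : ℕ} (μ : Measure (Fin m → ℝ))
    (a : (Fin ℓ → ℝ) → (Fin m → ℝ) → (Fin ℓ → ℝ))
    (t : ℕ) (i j : Fin ℓ) (h : (Fin ℓ → ℝ) → ℝ) (x : Fin ℓ → ℝ) : ℝ :=
  Qt μ a t (fun y => Pi.single j (h y)) x i

/-- Invariance of a measure `π` for the transition kernel
`P(x,A) = μ{n : a(x,n) ∈ A}`. -/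
def InvariantProb {ℓ m : ℕ} (μ : Measure (Fin m → ℝ))
    (a : (Fin ℓ → ℝ) → (Fin m → ℝ) → (Fin ℓ → ℝ))
    (π : Measure (Fin ℓ → ℝ)) : Prop :=
  ∀ A : Set (Fin ℓ → ℝ), MeasurableSet A → ∫⁻ x, μ {n | a x n ∈ A} ∂π = π A

/-- Assumptions (A1)–(A4) of the paper for the nonlinear state space model
`X(t+1) = a(X(t), N(t+1))` with i.i.d. noise of law `μ`. -/
structure Assumptions (ℓ m : ℕ) (μ : Measure (Fin m → ℝ))
    (a : (Fin ℓ → ℝ) → (Fin m → ℝ) → (Fin ℓ → ℝ))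
    (V W : (Fin ℓ → ℝ) → ℝ) (C : Set (Fin ℓ → ℝ)) (δ b : ℝ) : Prop where
  hℓ : 1 ≤ ℓ
  hμ : IsProbabilityMeasure μ
  ha_cont : Continuous fun q : (Fin ℓ → ℝ) × (Fin m → ℝ) => a q.1 q.2
  -- (A1)
  hA1_smooth : ∀ n, ContDiff ℝ 1 fun x => a x n
  hA1_bdd : ∃ K : ℝ, ∀ x n, ‖fderiv ℝ (fun z => a z n) x‖ ≤ K
  -- (A2)
  hA2 : ∃ t0 : ℕ, 1 ≤ t0 ∧ ∃ p : (Fin ℓ → ℝ) → (Fin ℓ → ℝ) → ℝ,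
    ContDiff ℝ 1 (fun q : (Fin ℓ → ℝ) × (Fin ℓ → ℝ) => p q.1 q.2) ∧
    ∀ x (A : Set (Fin ℓ → ℝ)), MeasurableSet A →
      Pt μ a t0 (Set.indicator A fun _ => (1:ℝ)) x = ∫ y in A, p x y
  -- (A3)
  hA3 : ∃ x0 : Fin ℓ → ℝ, ∀ x (O : Set (Fin ℓ → ℝ)), IsOpen O → x0 ∈ O →
    ∃ T : ℕ, ∀ t ≥ T, 0 < Pt μ a t (Set.indicator O fun _ => (1:ℝ)) x
  -- (A4)
  hV_smooth : ContDiff ℝ 1 V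
  hV_pos : ∀ x, 0 < V x
  hV_cpt : ∀ r : ℝ, IsCompact {x | V x ≤ r}
  hW_smooth : ContDiff ℝ 1 W
  hW_one : ∀ x, 1 ≤ W x
  hW_cpt : ∀ r : ℝ, IsCompact {x | W x ≤ r}
  hC : IsCompact C
  hδ : 0 < δ
  hDV3 : ∀ x, Real.log (Pstep μ a (fun y => Real.exp (V y)) x) - V x ≤
    -δ * W x + b * Set.indicator C (fun _ => (1:ℝ)) x

end

open MeasureTheory

noncomputable section

/-- Weighted sup norm `‖f‖_w`, valued in `ℝ≥0∞`. -/
noncomputable def ewnorm {ℓ : ℕ} (w f : (Fin ℓ → ℝ) → ℝ) : ℝ≥0∞ :=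
  ⨆ x, ENNReal.ofReal (|f x| / w x)

/-- Weighted Sobolev norm `‖f‖_{w,1}`, valued in `ℝ≥0∞`. -/
noncomputable def ewnorm1 {ℓ : ℕ} (w f : (Fin ℓ → ℝ) → ℝ) : ℝ≥0∞ :=
  ewnorm w f ⊔ ⨆ i : Fin ℓ, ewnorm w (pd i f)

/-- The smooth truncation functions `χ_n`: `C¹` functions with values in
`[0,1]`, equal to `1` on `[−n,n]^ℓ`, vanishing outside `[−(n+1),n+1]^ℓ`, and
with partial derivatives bounded by `2`. -/
structure TruncFam (ℓ : ℕ) (χ : ℕ → (Fin ℓ → ℝ) → ℝ) : Prop where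
  smooth : ∀ n, ContDiff ℝ 1 (χ n)
  mem01 : ∀ n x, χ n x ∈ Set.Icc (0:ℝ) 1
  eq_one : ∀ (n : ℕ) x, (∀ i, |x i| ≤ (n : ℝ)) → χ n x = 1
  eq_zero : ∀ (n : ℕ) x, ¬ (∀ i, |x i| ≤ (n : ℝ) + 1) → χ n x = 0
  deriv_bdd : ∀ (n : ℕ) (i : Fin ℓ) x, |pd i (χ n) x| ≤ 2

/-!
A separable operator `T` is close to a finite-rank operator `∑ sᵢ ⊗ νᵢ` with `νᵢ` integrating the
weight `w`, so the tail of `νᵢ` on `{w > M}` is small: up to `ε w`, and uniformly on balls of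
`L_w^∞`, `T f` depends only on `f` restricted to a sublevel set `{w ≤ M}`. If `T` is moreover
bounded for the unweighted sup norm, then `T f` is `ε w`-small where `w` is large, since
`f 1_{w ≤ M}` is bounded. As `χ_n = 1` on every given sublevel set for large `n`, both truncations
are harmless.

For the derivatives the point is that `∂ᵢ P^t f = ∑ⱼ Q^t_{i,j} ∂ⱼ f`. This holds for the compactly
supported `χ_n f` by differentiating under the expectation; the gradients of `P^t (χ_n f)` then
converge locally uniformly by separability of the `Q^t_{i,j}`, so the identity passes to the
limit. The remaining term `∂ᵢ χ_n · P^t (χ_n f)` lives where `w` is large, and there `P^t` is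
small.
-/

section WeightedOperators

variable {E : Type*} [MeasurableSpace E] {w : E → ℝ} {T : (E → ℝ) → E → ℝ}

/-- The closed ball of radius `c` in `L_w^∞`: measurable functions `f` with `‖f‖_w ≤ c`. The
bound is written without division, so that it makes sense for every `w`. -/
structure IsWBounded (w : E → ℝ) (c : ℝ) (f : E → ℝ) : Prop where
  measurable : Measurable f
  abs_le : ∀ x, |f x| ≤ c * w x

lemma isWBounded_one {f : E → ℝ} (hf : Measurable f) (hfw : ∀ x, |f x| ≤ w x) :
    IsWBounded w 1 f :=
  ⟨hf, by simpa only [one_mul] using hfw⟩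

namespace IsWBounded

variable {c d : ℝ} {f g : E → ℝ}

lemma mono (hf : IsWBounded w c f) (hw : ∀ x, 0 ≤ w x) (hcd : c ≤ d) : IsWBounded w d f :=
  ⟨hf.measurable, fun x => (hf.abs_le x).trans (mul_le_mul_of_nonneg_right hcd (hw x))⟩

lemma mul {u : E → ℝ} (hf : IsWBounded w c f) (hu : Measurable u) (hud : ∀ x, |u x| ≤ d) :
    IsWBounded w (d * c) (fun x => u x * f x) := by
  refine ⟨hu.mul hf.measurable, fun x => ?_⟩
  rw [abs_mul, mul_assoc]
  exact mul_le_mul (hud x) (hf.abs_le x) (abs_nonneg _) ((abs_nonneg _).trans (hud x))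

lemma add (hf : IsWBounded w c f) (hg : IsWBounded w d g) :
    IsWBounded w (c + d) (fun x => f x + g x) := by
  refine ⟨hf.measurable.add hg.measurable, fun x => (abs_add_le _ _).trans ?_⟩
  rw [add_mul]
  exact add_le_add (hf.abs_le x) (hg.abs_le x)

lemma indicator (hf : IsWBounded w c f) {s : Set E} (hs : MeasurableSet s) :
    IsWBounded w c (s.indicator f) :=
  ⟨hf.measurable.indicator hs, fun x =>
    (norm_indicator_le_norm_self f x).trans (hf.abs_le x)⟩

lemma integrable (hf : IsWBounded w c f) {ν : Measure E} (hw : Integrable w ν) :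
    Integrable f ν :=
  (hw.const_mul c).mono' hf.measurable.aestronglyMeasurable (Eventually.of_forall hf.abs_le)

end IsWBounded

lemma integrable_of_lintegral_ofReal_ne_top {ν : Measure E} (hwm : Measurable w)
    (hw : ∀ x, 0 ≤ w x) (h : ∫⁻ x, ENNReal.ofReal (w x) ∂ν ≠ ⊤) : Integrable w ν :=
  (lintegral_ofReal_ne_top_iff_integrable hwm.aestronglyMeasurable
    (Eventually.of_forall hw)).1 h

lemma tendsto_setIntegral_superlevel_atTop {ν : Measure E} (hwm : Measurable w)
    (hw : Integrable w ν) :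
    Tendsto (fun M : ℝ => ∫ x in {x | M < w x}, w x ∂ν) atTop (nhds 0) := by
  have hempty : (⋂ M : ℝ, {x | M < w x}) = ∅ :=
    Set.eq_empty_of_forall_notMem fun x hx =>
      lt_irrefl (w x) (Set.mem_iInter.1 hx (w x))
  have hanti : Antitone fun M : ℝ => {x | M < w x} := fun M M' hM x hx => lt_of_le_of_lt hM hx
  simpa only [hempty, setIntegral_empty] using
    tendsto_setIntegral_of_antitone (fun M => measurableSet_lt measurable_const hwm) hanti
      ⟨0, hw.integrableOn⟩

lemma abs_integral_sub_le_setIntegral_superlevel {ν : Measure E} (hwm : Measurable w)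
    (hw : Integrable w ν) {c M : ℝ} {f g : E → ℝ} (hf : IsWBounded w c f)
    (hg : IsWBounded w c g) (hfg : ∀ x, w x ≤ M → f x = g x) :
    |∫ x, f x ∂ν - ∫ x, g x ∂ν| ≤ 2 * c * ∫ x in {x | M < w x}, w x ∂ν := by
  have hS : MeasurableSet {x | M < w x} := measurableSet_lt measurable_const hwm
  rw [← integral_sub (hf.integrable hw) (hg.integrable hw), ← integral_const_mul,
    ← integral_indicator hS, ← Real.norm_eq_abs]
  refine norm_integral_le_of_norm_le ((hw.const_mul (2 * c)).indicator hS)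
    (Eventually.of_forall fun x => ?_)
  by_cases hx : M < w x
  · rw [Set.indicator_of_mem (show x ∈ {x | M < w x} from hx), Real.norm_eq_abs]
    linarith [abs_sub (f x) (g x), hf.abs_le x, hg.abs_le x]
  · rw [Set.indicator_of_notMem (show x ∉ {x | M < w x} from hx), hfg x (not_lt.1 hx), sub_self,
      norm_zero]

/-- The finite-rank operator `∑ sᵢ ⊗ νᵢ`, with the signed measure `νᵢ` given as a difference
`νᵢ⁺ - νᵢ⁻` of two measures. -/
def finiteRankOp {N : ℕ} (s : Fin N → E → ℝ) (νp νm : Fin N → Measure E) (f : E → ℝ) (x : E) :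
    ℝ :=
  ∑ i, s i x * ((∫ y, f y ∂(νp i)) - ∫ y, f y ∂(νm i))

lemma eventually_abs_finiteRankOp_sub_le {N : ℕ} {s : Fin N → E → ℝ}
    {νp νm : Fin N → Measure E} (hwm : Measurable w) (hw : ∀ x, 0 ≤ w x)
    (hs : ∀ i, ∃ A : ℝ, ∀ x, |s i x| ≤ A * w x)
    (hp : ∀ i, Integrable w (νp i)) (hm : ∀ i, Integrable w (νm i))
    (c : ℝ) {ε : ℝ} (hε : 0 < ε) :
    ∀ᶠ M in atTop, ∀ f g, IsWBounded w c f → IsWBounded w c g → (∀ x, w x ≤ M → f x = g x) →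
      ∀ x, |finiteRankOp s νp νm f x - finiteRankOp s νp νm g x| ≤ ε * w x := by
  choose A hA using hs
  have htail : Tendsto (fun M : ℝ => ∑ i, A i *
      (2 * c * (∫ x in {x | M < w x}, w x ∂(νp i)) + 2 * c * ∫ x in {x | M < w x}, w x ∂(νm i)))
      atTop (nhds 0) := by
    simpa using tendsto_finsetSum Finset.univ fun i _ =>
      (((tendsto_setIntegral_superlevel_atTop hwm (hp i)).const_mul (2 * c)).add
        ((tendsto_setIntegral_superlevel_atTop hwm (hm i)).const_mul (2 * c))).const_mul (A i)
  filter_upwards [htail.eventually_le_const hε] with M hM f g hf hg hfg x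
  refine le_trans ?_ (mul_le_mul_of_nonneg_right hM (hw x))
  rw [finiteRankOp, finiteRankOp, ← Finset.sum_sub_distrib, Finset.sum_mul]
  refine (Finset.abs_sum_le_sum_abs _ _).trans (Finset.sum_le_sum fun i _ => ?_)
  have hνp := abs_integral_sub_le_setIntegral_superlevel hwm (hp i) hf hg hfg
  have hνm := abs_integral_sub_le_setIntegral_superlevel hwm (hm i) hf hg hfg
  rw [← mul_sub, abs_mul, mul_right_comm, sub_sub_sub_comm]
  exact mul_le_mul (hA i x) ((abs_sub _ _).trans (add_le_add hνp hνm)) (abs_nonneg _)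
    ((abs_nonneg _).trans (hA i x))

/-- Separability of an operator `T` in `L_w^∞`: `T` is a limit, uniformly on the unit ball, of
finite-rank operators `∑ sᵢ ⊗ νᵢ` with `sᵢ ∈ L_w^∞` and `‖νᵢ‖_w < ∞`. -/
def IsSeparableOp (w : E → ℝ) (T : (E → ℝ) → E → ℝ) : Prop :=
  ∀ ε : ℝ, 0 < ε →
    ∃ (N : ℕ) (s : Fin N → E → ℝ) (νp νm : Fin N → Measure E),
      (∀ i, Measurable (s i) ∧ ∃ M : ℝ, ∀ x, |s i x| ≤ M * w x) ∧
      (∀ i, IsFiniteMeasure (νp i) ∧ IsFiniteMeasure (νm i) ∧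
        (∫⁻ x, ENNReal.ofReal (w x) ∂(νp i)) ≠ ⊤ ∧ (∫⁻ x, ENNReal.ofReal (w x) ∂(νm i)) ≠ ⊤) ∧
      ∀ f : E → ℝ, Measurable f → (∀ x, |f x| ≤ w x) →
        ∀ x, |T f x - finiteRankOp s νp νm f x| ≤ ε * w x

/-- Homogeneity `T(cf) = c T f` for all functions. Kernel operators defined by Bochner integrals
have it without any integrability condition, whereas they are not additive in general. -/
def IsHomogeneousOp (T : (E → ℝ) → E → ℝ) : Prop :=
  ∀ (c : ℝ) (f : E → ℝ) (x : E), T (fun y => c * f y) x = c * T f x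

/-- Boundedness of `T` for the unweighted sup norm. -/
def IsSupBoundedOp (T : (E → ℝ) → E → ℝ) : Prop :=
  ∃ B : ℝ, ∀ (c : ℝ) (f : E → ℝ), (∀ y, |f y| ≤ c) → ∀ x, |T f x| ≤ B * c

namespace IsSeparableOp

lemma eventually_abs_sub_le_of_unitBall (hT : IsSeparableOp w T) (hwm : Measurable w)
    (hw : ∀ x, 0 ≤ w x) {ε : ℝ} (hε : 0 < ε) :
    ∀ᶠ M in atTop, ∀ f g, IsWBounded w 1 f → IsWBounded w 1 g → (∀ x, w x ≤ M → f x = g x) →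
      ∀ x, |T f x - T g x| ≤ ε * w x := by
  obtain ⟨N, s, νp, νm, hs, hν, happrox⟩ := hT (ε / 3) (by positivity)
  have hint {ν : Measure E} := integrable_of_lintegral_ofReal_ne_top (ν := ν) hwm hw
  filter_upwards [eventually_abs_finiteRankOp_sub_le hwm hw (fun i => (hs i).2)
    (fun i => hint (hν i).2.2.1) (fun i => hint (hν i).2.2.2) 1 (show 0 < ε / 3 by positivity)]
    with M hM f g hf hg hfg x
  have hTf := happrox f hf.measurable (by simpa only [one_mul] using hf.abs_le) x
  have hTg := happrox g hg.measurable (by simpa only [one_mul] using hg.abs_le) x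
  have hF := hM f g hf hg hfg x
  rw [abs_le] at *
  constructor <;> linarith

lemma eventually_abs_sub_le (hT : IsSeparableOp w T) (hom : IsHomogeneousOp T)
    (hwm : Measurable w) (hw : ∀ x, 0 ≤ w x) (c : ℝ) {ε : ℝ} (hε : 0 < ε) :
    ∀ᶠ M in atTop, ∀ f g, IsWBounded w c f → IsWBounded w c g → (∀ x, w x ≤ M → f x = g x) →
      ∀ x, |T f x - T g x| ≤ ε * w x := by
  obtain ⟨C, hcC, hC0⟩ : ∃ C, c ≤ C ∧ 0 < C :=
    ⟨max c 1, le_max_left c 1, lt_max_of_lt_right one_pos⟩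
  have hscale {f : E → ℝ} (hf : IsWBounded w c f) : IsWBounded w 1 (fun x => C⁻¹ * f x) := by
    have h := (hf.mono hw hcC).mul measurable_const fun _ => (abs_of_pos (inv_pos.2 hC0)).le
    rwa [inv_mul_cancel₀ hC0.ne'] at h
  filter_upwards [hT.eventually_abs_sub_le_of_unitBall hwm hw (div_pos hε hC0)]
    with M hM f g hf hg hfg x
  have h := hM _ _ (hscale hf) (hscale hg) (fun y hy => by rw [hfg y hy]) x
  rw [hom, hom, ← mul_sub, abs_mul, abs_of_pos (inv_pos.2 hC0), inv_mul_le_iff₀ hC0] at h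
  exact h.trans_eq (by field_simp)

lemma eventually_abs_le_of_le (hT : IsSeparableOp w T) (hom : IsHomogeneousOp T)
    (hbdd : IsSupBoundedOp T) (hwm : Measurable w) (hw : ∀ x, 0 ≤ w x) (c : ℝ) {ε : ℝ}
    (hε : 0 < ε) :
    ∀ᶠ M in atTop, ∀ f, IsWBounded w c f → ∀ x, M ≤ w x → |T f x| ≤ ε * w x := by
  obtain ⟨B, hB⟩ := hbdd
  obtain ⟨K, hK, hK0⟩ := ((hT.eventually_abs_sub_le hom hwm hw c (half_pos hε)).and
    (eventually_ge_atTop 0)).exists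
  have hS : MeasurableSet {x | w x ≤ K} := measurableSet_le hwm measurable_const
  filter_upwards [eventually_ge_atTop (B * (|c| * K) / (ε / 2))] with M hM f hf x hx
  set f₁ := {x | w x ≤ K}.indicator f with hf₁
  have hsub : |T f x - T f₁ x| ≤ ε / 2 * w x :=
    hK f f₁ hf (hf.indicator hS) (fun y hy => (Set.indicator_of_mem (s := {x | w x ≤ K}) hy f).symm)
      x
  have hf₁K (y : E) : |f₁ y| ≤ |c| * K := by
    by_cases hy : w y ≤ K
    · calc |f₁ y| ≤ c * w y := (hf.indicator hS).abs_le y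
        _ ≤ |c| * K := mul_le_mul (le_abs_self c) hy (hw y) (abs_nonneg c)
    · rw [hf₁, Set.indicator_of_notMem (show y ∉ {x | w x ≤ K} from hy), abs_zero]
      positivity
  have hTf₁ : |T f₁ x| ≤ ε / 2 * w x :=
    calc |T f₁ x| ≤ B * (|c| * K) := hB _ f₁ hf₁K x
      _ ≤ w x * (ε / 2) := (div_le_iff₀ (half_pos hε)).1 (hM.trans hx)
      _ = ε / 2 * w x := mul_comm _ _
  linarith [abs_sub_abs_le_abs_sub (T f x) (T f₁ x)]

theorem eventually_abs_sub_mul_le (hT : IsSeparableOp w T) (hom : IsHomogeneousOp T)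
    (hbdd : IsSupBoundedOp T) (hwm : Measurable w) (hw : ∀ x, 0 ≤ w x) (c : ℝ) {ε : ℝ}
    (hε : 0 < ε) :
    ∀ᶠ M in atTop, ∀ f g, IsWBounded w c f → IsWBounded w c g → (∀ x, w x ≤ M → f x = g x) →
      ∀ x, ∀ u ∈ Set.Icc (0 : ℝ) 1, (w x ≤ M → u = 1) → |T f x - u * T g x| ≤ ε * w x := by
  filter_upwards [hT.eventually_abs_sub_le hom hwm hw c (half_pos hε),
    hT.eventually_abs_le_of_le hom hbdd hwm hw c (half_pos hε)]
    with M hsub hfar f g hf hg hfg x u hu hu1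
  have hrest : |(1 - u) * T g x| ≤ ε / 2 * w x := by
    rcases le_or_gt (w x) M with hx | hx
    · rw [hu1 hx, sub_self, zero_mul, abs_zero]
      exact mul_nonneg (half_pos hε).le (hw x)
    · rw [abs_mul, abs_of_nonneg (sub_nonneg.2 hu.2)]
      exact (mul_le_of_le_one_left (abs_nonneg _) (sub_le_self 1 hu.1)).trans
        (hfar g hg x hx.le)
  calc |T f x - u * T g x| = |(T f x - T g x) + (1 - u) * T g x| := by ring_nf
    _ ≤ ε / 2 * w x + ε / 2 * w x :=
      (abs_add_le _ _).trans (add_le_add (hsub f g hf hg hfg x) hrest)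
    _ = ε * w x := by ring

end IsSeparableOp

end WeightedOperators

section SensitivityKernels

variable {ℓ m : ℕ} {μ : Measure (Fin m → ℝ)} {a : (Fin ℓ → ℝ) → (Fin m → ℝ) → (Fin ℓ → ℝ)}

lemma fderiv_apply_eq_sum_pd (f : (Fin ℓ → ℝ) → ℝ) (x v : Fin ℓ → ℝ) :
    fderiv ℝ f x v = ∑ j, v j * pd j f x := by
  conv_lhs => rw [pi_eq_sum_univ' v]
  simp only [map_sum, map_smul, smul_eq_mul, pd]

lemma measurable_pd (i : Fin ℓ) (f : (Fin ℓ → ℝ) → ℝ) : Measurable (pd i f) :=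
  measurable_fderiv_apply_const ℝ f _

/-- The regularity of the model used for differentiating expectations: `a` is jointly continuous,
and differentiable in the state with a uniformly bounded derivative. -/
structure IsSmoothModel (a : (Fin ℓ → ℝ) → (Fin m → ℝ) → (Fin ℓ → ℝ)) : Prop where
  continuous : Continuous fun q : (Fin ℓ → ℝ) × (Fin m → ℝ) => a q.1 q.2
  differentiable : ∀ n, Differentiable ℝ fun x => a x n
  exists_norm_fderiv_le : ∃ K : ℝ, ∀ x n, ‖fderiv ℝ (fun z => a z n) x‖ ≤ K

/-- The entry `∂ᵢ aⱼ(x, n)` of the matrix `∇ₓa(x, n) = A(t)ᵀ` driving the sensitivity process. -/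
def jac (a : (Fin ℓ → ℝ) → (Fin m → ℝ) → (Fin ℓ → ℝ)) (i j : Fin ℓ) (x : Fin ℓ → ℝ)
    (n : Fin m → ℝ) : ℝ :=
  fderiv ℝ (fun z => a z n) x (Pi.single i 1) j

lemma Qt_succ_apply (t : ℕ) (g : (Fin ℓ → ℝ) → (Fin ℓ → ℝ)) (x : Fin ℓ → ℝ) (i : Fin ℓ) :
    Qt μ a (t + 1) g x i = ∫ n, ∑ j, jac a i j x n * Qt μ a t g (a x n) j ∂μ :=
  rfl

lemma abs_jac_le {K : ℝ} (hK : ∀ x n, ‖fderiv ℝ (fun z => a z n) x‖ ≤ K) (i j : Fin ℓ)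
    (x : Fin ℓ → ℝ) (n : Fin m → ℝ) : |jac a i j x n| ≤ K :=
  calc |jac a i j x n| ≤ ‖fderiv ℝ (fun z => a z n) x (Pi.single i 1)‖ :=
      norm_le_pi_norm (fderiv ℝ (fun z => a z n) x (Pi.single i 1)) j
    _ ≤ ‖fderiv ℝ (fun z => a z n) x‖ * ‖(Pi.single i 1 : Fin ℓ → ℝ)‖ :=
      ContinuousLinearMap.le_opNorm _ _
    _ ≤ K := by simpa only [Pi.norm_single, norm_one, mul_one] using hK x n

lemma measurable_jac (ha : Continuous fun q : (Fin ℓ → ℝ) × (Fin m → ℝ) => a q.1 q.2)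
    (i j : Fin ℓ) : Measurable fun q : (Fin ℓ → ℝ) × (Fin m → ℝ) => jac a i j q.1 q.2 := by
  have ha' : Continuous (Function.uncurry fun (n : Fin m → ℝ) (z : Fin ℓ → ℝ) => a z n) :=
    ha.comp continuous_swap
  exact (measurable_pi_apply j).comp
    ((measurable_fderiv_apply_const_with_param ℝ ha' (Pi.single i 1)).comp measurable_swap)

lemma isHomogeneousOp_Pt (t : ℕ) : IsHomogeneousOp (Pt μ a t) := by
  intro c f
  induction t with
  | zero => exact fun _ => rfl
  | succ t ih =>
    intro x
    simp only [Pt, Pstep, ih, integral_const_mul]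

lemma isSupBoundedOp_Pt [IsFiniteMeasure μ] (t : ℕ) : IsSupBoundedOp (Pt μ a t) := by
  induction t with
  | zero => exact ⟨1, fun c f hf x => (hf x).trans_eq (one_mul c).symm⟩
  | succ t ih =>
    obtain ⟨B, hB⟩ := ih
    refine ⟨B * μ.real Set.univ, fun c f hf x => ?_⟩
    rw [mul_right_comm, ← Real.norm_eq_abs]
    exact norm_integral_le_of_norm_le_const (Eventually.of_forall fun n => hB c f hf (a x n))

lemma Qt_const_mul (t : ℕ) (c : ℝ) (g : (Fin ℓ → ℝ) → (Fin ℓ → ℝ)) (x : Fin ℓ → ℝ) :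
    Qt μ a t (fun y => c • g y) x = c • Qt μ a t g x := by
  induction t generalizing x with
  | zero => rfl
  | succ t ih =>
    ext i
    simp only [Qt_succ_apply, ih, Pi.smul_apply, smul_eq_mul, ← integral_const_mul,
      Finset.mul_sum, mul_left_comm]

lemma isHomogeneousOp_Qtij (t : ℕ) (i j : Fin ℓ) : IsHomogeneousOp (Qtij μ a t i j) := by
  intro c f x
  simp only [Qtij, ← smul_eq_mul, Pi.single_smul, Qt_const_mul, Pi.smul_apply]

lemma exists_abs_Qt_le [IsFiniteMeasure μ]
    (ha : ∃ K : ℝ, ∀ x n, ‖fderiv ℝ (fun z => a z n) x‖ ≤ K) (t : ℕ) :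
    ∃ B : ℝ, ∀ (c : ℝ) (g : (Fin ℓ → ℝ) → (Fin ℓ → ℝ)), (∀ y, ‖g y‖ ≤ c) →
      ∀ x i, |Qt μ a t g x i| ≤ B * c := by
  obtain ⟨K, hK⟩ := ha
  induction t with
  | zero => exact ⟨1, fun c g hg x i =>
      ((norm_le_pi_norm (g x) i).trans (hg x)).trans_eq (one_mul c).symm⟩
  | succ t ih =>
    obtain ⟨B, hB⟩ := ih
    refine ⟨ℓ * (K * B) * μ.real Set.univ, fun c g hg x i => ?_⟩
    rw [mul_right_comm, ← Real.norm_eq_abs]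
    refine norm_integral_le_of_norm_le_const (Eventually.of_forall fun n => ?_)
    calc ‖∑ j, jac a i j x n * Qt μ a t g (a x n) j‖
        ≤ ∑ j, |jac a i j x n * Qt μ a t g (a x n) j| := norm_sum_le _ _
      _ ≤ ∑ _j : Fin ℓ, K * (B * c) := Finset.sum_le_sum fun j _ => by
        rw [abs_mul]
        exact mul_le_mul (abs_jac_le hK i j x n) (hB c g hg (a x n) j) (abs_nonneg _)
          ((abs_nonneg _).trans (abs_jac_le hK i j x n))
      _ = ℓ * (K * B) * c := by
        rw [Finset.sum_const, Finset.card_univ, Fintype.card_fin, nsmul_eq_mul, ← mul_assoc K,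
          ← mul_assoc]

lemma isSupBoundedOp_Qtij [IsFiniteMeasure μ]
    (ha : ∃ K : ℝ, ∀ x n, ‖fderiv ℝ (fun z => a z n) x‖ ≤ K) (t : ℕ) (i j : Fin ℓ) :
    IsSupBoundedOp (Qtij μ a t i j) := by
  obtain ⟨B, hB⟩ := exists_abs_Qt_le (μ := μ) ha t
  refine ⟨B, fun c f hf x => hB c (fun y => Pi.single j (f y)) (fun y => ?_) x i⟩
  rw [Pi.norm_single]
  exact hf y

lemma measurable_Qt [SFinite μ]
    (ha : Continuous fun q : (Fin ℓ → ℝ) × (Fin m → ℝ) => a q.1 q.2) (t : ℕ)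
    {g : (Fin ℓ → ℝ) → (Fin ℓ → ℝ)} (hg : Measurable g) : Measurable (Qt μ a t g) := by
  induction t with
  | zero => exact hg
  | succ t ih =>
    refine measurable_pi_iff.2 fun i => ?_
    have hterm : Measurable fun q : (Fin ℓ → ℝ) × (Fin m → ℝ) =>
        ∑ j, jac a i j q.1 q.2 * Qt μ a t g (a q.1 q.2) j :=
      Finset.measurable_fun_sum _ fun j _ =>
        (measurable_jac ha i j).mul ((measurable_pi_iff.1 ih j).comp ha.measurable)
    exact hterm.stronglyMeasurable.integral_prod_right'.measurable

lemma IsSmoothModel.integrable_jac_mul_Qt [IsFiniteMeasure μ] (ha : IsSmoothModel a) (t : ℕ)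
    {g : (Fin ℓ → ℝ) → (Fin ℓ → ℝ)} (hg : Measurable g) {c : ℝ} (hgc : ∀ y, ‖g y‖ ≤ c)
    (x : Fin ℓ → ℝ) (i j : Fin ℓ) :
    Integrable (fun n => jac a i j x n * Qt μ a t g (a x n) j) μ := by
  obtain ⟨K, hK⟩ := ha.exists_norm_fderiv_le
  obtain ⟨B, hB⟩ := exists_abs_Qt_le (μ := μ) ha.exists_norm_fderiv_le t
  have hmeas : Measurable fun q : (Fin ℓ → ℝ) × (Fin m → ℝ) =>
      jac a i j q.1 q.2 * Qt μ a t g (a q.1 q.2) j :=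
    (measurable_jac ha.continuous i j).mul
      ((measurable_pi_iff.1 (measurable_Qt ha.continuous t hg) j).comp ha.continuous.measurable)
  refine Integrable.of_bound (hmeas.comp measurable_prodMk_left).aestronglyMeasurable
    (K * (B * c)) (Eventually.of_forall fun n => ?_)
  rw [norm_mul]
  exact mul_le_mul (abs_jac_le hK i j x n) (hB c g hgc (a x n) j) (norm_nonneg _)
    ((abs_nonneg _).trans (abs_jac_le hK i j x n))

lemma IsSmoothModel.Qt_eq_sum_Qtij [IsFiniteMeasure μ] (ha : IsSmoothModel a) (t : ℕ)
    {g : (Fin ℓ → ℝ) → (Fin ℓ → ℝ)} (hg : Measurable g) {c : ℝ} (hgc : ∀ y, ‖g y‖ ≤ c)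
    (x : Fin ℓ → ℝ) (i : Fin ℓ) :
    Qt μ a t g x i = ∑ j, Qtij μ a t i j (fun y => g y j) x := by
  induction t generalizing x i with
  | zero => simp [Qtij, Qt, Pi.single_apply]
  | succ t ih =>
    have hmeas (j : Fin ℓ) : Measurable fun y => (Pi.single j (g y j) : Fin ℓ → ℝ) :=
      (continuous_single j).measurable.comp (measurable_pi_iff.1 hg j)
    have hbound (j : Fin ℓ) (y : Fin ℓ → ℝ) : ‖(Pi.single j (g y j) : Fin ℓ → ℝ)‖ ≤ c := by
      rw [Pi.norm_single]
      exact (norm_le_pi_norm (g y) j).trans (hgc y)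
    calc Qt μ a (t + 1) g x i
        = ∫ n, ∑ k, jac a i k x n * ∑ j, Qtij μ a t k j (fun y => g y j) (a x n) ∂μ := by
          simp only [Qt_succ_apply, ih]
      _ = ∫ n, ∑ j, ∑ k, jac a i k x n * Qtij μ a t k j (fun y => g y j) (a x n) ∂μ := by
          simp only [Finset.mul_sum]
          exact integral_congr_ae (Eventually.of_forall fun n => Finset.sum_comm)
      _ = ∑ j, Qtij μ a (t + 1) i j (fun y => g y j) x :=
          integral_finsetSum _ fun j _ => integrable_finsetSum _ fun k _ =>
            ha.integrable_jac_mul_Qt t (hmeas j) (hbound j) x i k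

/-- Bounded differentiable functions with bounded derivative: a class stable under `P`, on which
one can differentiate under the expectation. -/
structure IsBddDiff (f : (Fin ℓ → ℝ) → ℝ) : Prop where
  differentiable : Differentiable ℝ f
  exists_abs_le : ∃ c : ℝ, ∀ x, |f x| ≤ c
  exists_norm_fderiv_le : ∃ c : ℝ, ∀ x, ‖fderiv ℝ f x‖ ≤ c

lemma isBddDiff_of_hasCompactSupport {f : (Fin ℓ → ℝ) → ℝ} (hf : ContDiff ℝ 1 f)
    (hsupp : HasCompactSupport f) : IsBddDiff f where
  differentiable := hf.differentiable one_ne_zero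
  exists_abs_le := hf.continuous.bounded_above_of_compact_support hsupp
  exists_norm_fderiv_le :=
    (hf.continuous_fderiv one_ne_zero).bounded_above_of_compact_support (hsupp.fderiv ℝ)

namespace IsBddDiff

variable {f : (Fin ℓ → ℝ) → ℝ}

lemma hasFDerivAt_comp (hf : IsBddDiff f) (ha : IsSmoothModel a) (x : Fin ℓ → ℝ)
    (n : Fin m → ℝ) :
    HasFDerivAt (fun z => f (a z n)) ((fderiv ℝ f (a x n)).comp (fderiv ℝ (fun z => a z n) x)) x :=
  (hf.differentiable (a x n)).hasFDerivAt.comp x (ha.differentiable n x).hasFDerivAt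

lemma exists_norm_fderiv_comp_le (hf : IsBddDiff f) (ha : IsSmoothModel a) :
    ∃ c : ℝ, ∀ x n, ‖fderiv ℝ (fun z => f (a z n)) x‖ ≤ c := by
  obtain ⟨c, hc⟩ := hf.exists_norm_fderiv_le
  obtain ⟨K, hK⟩ := ha.exists_norm_fderiv_le
  refine ⟨c * K, fun x n => ?_⟩
  rw [(hf.hasFDerivAt_comp ha x n).fderiv]
  exact (ContinuousLinearMap.opNorm_comp_le _ _).trans
    (mul_le_mul (hc _) (hK x n) (norm_nonneg _) ((norm_nonneg _).trans (hc 0)))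

lemma integrable_fderiv_comp [IsFiniteMeasure μ] (hf : IsBddDiff f) (ha : IsSmoothModel a)
    (x : Fin ℓ → ℝ) : Integrable (fun n => fderiv ℝ (fun z => f (a z n)) x) μ := by
  obtain ⟨c, hc⟩ := hf.exists_norm_fderiv_comp_le ha
  have hcont : Continuous (Function.uncurry fun (n : Fin m → ℝ) (z : Fin ℓ → ℝ) => f (a z n)) :=
    hf.differentiable.continuous.comp (ha.continuous.comp continuous_swap)
  exact Integrable.of_bound ((measurable_fderiv_with_param ℝ hcont).comp
    measurable_prodMk_right).aestronglyMeasurable c (Eventually.of_forall fun n => hc x n)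

lemma hasFDerivAt_Pstep [IsFiniteMeasure μ] (hf : IsBddDiff f) (ha : IsSmoothModel a)
    (x : Fin ℓ → ℝ) :
    HasFDerivAt (Pstep μ a f) (∫ n, fderiv ℝ (fun z => f (a z n)) x ∂μ) x := by
  obtain ⟨b, hb⟩ := hf.exists_abs_le
  obtain ⟨c, hc⟩ := hf.exists_norm_fderiv_comp_le ha
  have hmeas (z : Fin ℓ → ℝ) : AEStronglyMeasurable (fun n => f (a z n)) μ :=
    (hf.differentiable.continuous.comp
      (ha.continuous.comp (Continuous.prodMk_right z))).aestronglyMeasurable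
  exact hasFDerivAt_integral_of_dominated_of_fderiv_le (s := Set.univ) (bound := fun _ => c)
    univ_mem (Eventually.of_forall hmeas)
    (Integrable.of_bound (hmeas x) b (Eventually.of_forall fun n => hb _))
    (hf.integrable_fderiv_comp ha x).aestronglyMeasurable
    (Eventually.of_forall fun n z _ => hc z n) (integrable_const c)
    (Eventually.of_forall fun n z _ => (hf.hasFDerivAt_comp ha z n).differentiableAt.hasFDerivAt)

lemma pd_Pstep [IsFiniteMeasure μ] (hf : IsBddDiff f) (ha : IsSmoothModel a) (i : Fin ℓ)
    (x : Fin ℓ → ℝ) :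
    pd i (Pstep μ a f) x = ∫ n, ∑ j, jac a i j x n * pd j f (a x n) ∂μ := by
  rw [pd, (hf.hasFDerivAt_Pstep ha x).fderiv,
    ContinuousLinearMap.integral_apply (hf.integrable_fderiv_comp ha x)]
  refine integral_congr_ae (Eventually.of_forall fun n => ?_)
  simp only [(hf.hasFDerivAt_comp ha x n).fderiv, ContinuousLinearMap.comp_apply,
    fderiv_apply_eq_sum_pd, jac]

protected lemma Pstep [IsFiniteMeasure μ] (hf : IsBddDiff f) (ha : IsSmoothModel a) :
    IsBddDiff (Pstep μ a f) where
  differentiable := fun x => (hf.hasFDerivAt_Pstep ha x).differentiableAt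
  exists_abs_le := by
    obtain ⟨c, hc⟩ := hf.exists_abs_le
    refine ⟨c * μ.real Set.univ, fun x => ?_⟩
    rw [← Real.norm_eq_abs]
    exact norm_integral_le_of_norm_le_const (Eventually.of_forall fun n => hc (a x n))
  exists_norm_fderiv_le := by
    obtain ⟨c, hc⟩ := hf.exists_norm_fderiv_comp_le ha
    refine ⟨c * μ.real Set.univ, fun x => ?_⟩
    rw [(hf.hasFDerivAt_Pstep ha x).fderiv]
    exact norm_integral_le_of_norm_le_const (Eventually.of_forall fun n => hc x n)

protected lemma Pt [IsFiniteMeasure μ] (hf : IsBddDiff f) (ha : IsSmoothModel a) (t : ℕ) :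
    IsBddDiff (Pt μ a t f) := by
  induction t with
  | zero => exact hf
  | succ t ih => exact ih.Pstep ha

lemma pd_Pt_eq_Qt [IsFiniteMeasure μ] (hf : IsBddDiff f) (ha : IsSmoothModel a) (t : ℕ)
    (i : Fin ℓ) (x : Fin ℓ → ℝ) : pd i (Pt μ a t f) x = Qt μ a t (fun y j => pd j f y) x i := by
  induction t generalizing i x with
  | zero => rfl
  | succ t ih => simp only [Pt, (hf.Pt ha t).pd_Pstep ha, Qt_succ_apply, ih]

lemma norm_pd_le {c : ℝ} (hc : ∀ x, ‖fderiv ℝ f x‖ ≤ c) (x : Fin ℓ → ℝ) :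
    ‖fun j => pd j f x‖ ≤ c := by
  refine (pi_norm_le_iff_of_nonneg ((norm_nonneg _).trans (hc 0))).2 fun j => ?_
  calc ‖pd j f x‖ ≤ ‖fderiv ℝ f x‖ * ‖(Pi.single j 1 : Fin ℓ → ℝ)‖ :=
        ContinuousLinearMap.le_opNorm _ _
    _ ≤ c := by simpa only [Pi.norm_single, norm_one, mul_one] using hc x

theorem pd_Pt [IsFiniteMeasure μ] (hf : IsBddDiff f) (ha : IsSmoothModel a) (t : ℕ)
    (i : Fin ℓ) (x : Fin ℓ → ℝ) :
    pd i (Pt μ a t f) x = ∑ j, Qtij μ a t i j (pd j f) x := by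
  obtain ⟨c, hc⟩ := hf.exists_norm_fderiv_le
  rw [hf.pd_Pt_eq_Qt ha]
  exact ha.Qt_eq_sum_Qtij t (measurable_pi_iff.2 fun j => measurable_pd j f) (norm_pd_le hc) x i

end IsBddDiff

end SensitivityKernels

section UniformGradientLimit

lemma tendstoUniformlyOnFilter_of_dist_le_mul {X ι α : Type*} [TopologicalSpace X]
    [PseudoMetricSpace α] {l : Filter ι} {F : ι → X → α} {G : X → α} {w : X → ℝ} {x : X}
    (hw : ContinuousAt w x)
    (h : ∀ ε : ℝ, 0 < ε → ∀ᶠ n in l, ∀ y, dist (G y) (F n y) ≤ ε * w y) :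
    TendstoUniformlyOnFilter F G l (nhds x) := by
  rw [Metric.tendstoUniformlyOnFilter_iff]
  intro ε hε
  have hR : 0 < |w x| + 1 := by positivity
  have hnear : ∀ᶠ y in nhds x, w y < |w x| + 1 :=
    hw.eventually_lt_const ((le_abs_self _).trans_lt (lt_add_one _))
  filter_upwards [(h (ε / (|w x| + 1)) (by positivity)).prod_mk hnear] with q hq
  calc dist (G q.2) (F q.1 q.2) ≤ ε / (|w x| + 1) * w q.2 := hq.1 q.2
    _ < ε / (|w x| + 1) * (|w x| + 1) := mul_lt_mul_of_pos_left hq.2 (by positivity)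
    _ = ε := div_mul_cancel₀ ε hR.ne'

variable {ℓ : ℕ}

/-- The dot product `v ↦ (u ↦ v ⬝ u)` as a continuous bilinear form: it turns a gradient on
`ℝ^ℓ` into the corresponding Fréchet derivative. -/
def dotProductCLM (ℓ : ℕ) : (Fin ℓ → ℝ) →L[ℝ] (Fin ℓ → ℝ) →L[ℝ] ℝ :=
  LinearMap.toContinuousLinearMap
    (LinearMap.toContinuousLinearMap.toLinearMap ∘ₗ dotProductBilin ℝ ℝ)

lemma dotProductCLM_apply (v u : Fin ℓ → ℝ) : dotProductCLM ℓ v u = v ⬝ᵥ u :=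
  rfl

lemma hasFDerivAt_dotProductCLM {f : (Fin ℓ → ℝ) → ℝ} {x : Fin ℓ → ℝ}
    (hf : DifferentiableAt ℝ f x) : HasFDerivAt f (dotProductCLM ℓ fun i => pd i f x) x := by
  refine hf.hasFDerivAt.congr_fderiv (ContinuousLinearMap.ext fun v => ?_)
  rw [fderiv_apply_eq_sum_pd, dotProductCLM_apply, dotProduct_comm]
  rfl

lemma pd_eq_of_hasFDerivAt_dotProductCLM {f : (Fin ℓ → ℝ) → ℝ} {x v : Fin ℓ → ℝ}
    (hf : HasFDerivAt f (dotProductCLM ℓ v) x) (i : Fin ℓ) : pd i f x = v i := by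
  rw [pd, hf.fderiv, dotProductCLM_apply, dotProduct_single_one]

lemma hasFDerivAt_of_tendstoUniformlyOnFilter_pd {ι : Type*} {l : Filter ι} [l.NeBot]
    {F : ι → (Fin ℓ → ℝ) → ℝ} {f : (Fin ℓ → ℝ) → ℝ} {G : (Fin ℓ → ℝ) → (Fin ℓ → ℝ)}
    {x : Fin ℓ → ℝ} (hF : ∀ n, Differentiable ℝ (F n))
    (hG : TendstoUniformlyOnFilter (fun n y i => pd i (F n) y) G l (nhds x))
    (hf : ∀ y, Tendsto (fun n => F n y) l (nhds (f y))) :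
    HasFDerivAt f (dotProductCLM ℓ (G x)) x :=
  hasFDerivAt_of_tendstoUniformlyOnFilter
    ((dotProductCLM ℓ).uniformContinuous.comp_tendstoUniformlyOnFilter hG)
    (Eventually.of_forall fun q => hasFDerivAt_dotProductCLM (hF q.1 q.2))
    (Eventually.of_forall hf)

end UniformGradientLimit

section Truncation

variable {ℓ : ℕ} {w : (Fin ℓ → ℝ) → ℝ} {χ : ℕ → (Fin ℓ → ℝ) → ℝ}

lemma pd_mul {f g : (Fin ℓ → ℝ) → ℝ} {x : Fin ℓ → ℝ} (hf : DifferentiableAt ℝ f x)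
    (hg : DifferentiableAt ℝ g x) (i : Fin ℓ) :
    pd i (fun y => f y * g y) x = f x * pd i g x + pd i f x * g x := by
  rw [pd, fderiv_fun_mul hf hg, add_apply, smul_apply, smul_apply, smul_eq_mul, smul_eq_mul,
    mul_comm (g x), pd, pd]

lemma pd_sub {f g : (Fin ℓ → ℝ) → ℝ} {x : Fin ℓ → ℝ} (hf : DifferentiableAt ℝ f x)
    (hg : DifferentiableAt ℝ g x) (i : Fin ℓ) :
    pd i (fun y => f y - g y) x = pd i f x - pd i g x := by
  rw [pd, fderiv_fun_sub hf hg, sub_apply, pd, pd]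

lemma pd_congr {f g : (Fin ℓ → ℝ) → ℝ} {x : Fin ℓ → ℝ} (h : f =ᶠ[nhds x] g) (i : Fin ℓ) :
    pd i f x = pd i g x := by
  rw [pd, h.fderiv_eq, pd]

/-- The properties of the weight `e^V` on which the truncation argument rests: continuity,
positivity and coercivity. -/
structure IsCoerciveWeight (w : (Fin ℓ → ℝ) → ℝ) : Prop where
  continuous : Continuous w
  pos : ∀ x, 0 < w x
  isBounded_sublevel : ∀ M : ℝ, Bornology.IsBounded {x | w x ≤ M}

lemma IsCoerciveWeight.nonneg (hw : IsCoerciveWeight w) (x : Fin ℓ → ℝ) : 0 ≤ w x :=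
  (hw.pos x).le

/-- The unit ball of `L_w^1`: the `C¹` functions `f` with `‖f‖_{w,1} ≤ 1`. -/
structure IsSobolevUnit (w f : (Fin ℓ → ℝ) → ℝ) : Prop where
  contDiff : ContDiff ℝ 1 f
  abs_le : ∀ x, |f x| ≤ w x
  abs_pd_le : ∀ i x, |pd i f x| ≤ w x

namespace IsSobolevUnit

variable {f : (Fin ℓ → ℝ) → ℝ}

lemma differentiable (hf : IsSobolevUnit w f) : Differentiable ℝ f :=
  hf.contDiff.differentiable one_ne_zero

lemma isWBounded (hf : IsSobolevUnit w f) : IsWBounded w 1 f :=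
  isWBounded_one hf.contDiff.continuous.measurable hf.abs_le

lemma isWBounded_pd (hf : IsSobolevUnit w f) (i : Fin ℓ) : IsWBounded w 1 (pd i f) :=
  isWBounded_one (measurable_pd i f) (hf.abs_pd_le i)

end IsSobolevUnit

namespace TruncFam

variable {f : (Fin ℓ → ℝ) → ℝ}

lemma differentiable (hχ : TruncFam ℓ χ) (n : ℕ) : Differentiable ℝ (χ n) :=
  (hχ.smooth n).differentiable one_ne_zero

lemma isBddDiff_mul (hχ : TruncFam ℓ χ) (n : ℕ) (hf : ContDiff ℝ 1 f) :
    IsBddDiff fun y => χ n y * f y := by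
  refine isBddDiff_of_hasCompactSupport ((hχ.smooth n).mul hf)
    (HasCompactSupport.intro (isCompact_closedBall 0 ((n : ℝ) + 1)) fun x hx => ?_)
  rw [mem_closedBall_zero_iff, pi_norm_le_iff_of_nonneg (by positivity)] at hx
  rw [hχ.eq_zero n x hx, zero_mul]

lemma isWBounded_mul (hχ : TruncFam ℓ χ) (n : ℕ) {c : ℝ} (hf : IsWBounded w c f) :
    IsWBounded w c fun y => χ n y * f y := by
  have h := hf.mul (hχ.smooth n).continuous.measurable fun y =>
    (abs_of_nonneg (hχ.mem01 n y).1).trans_le (hχ.mem01 n y).2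
  rwa [one_mul] at h

lemma isWBounded_pd_mul (hχ : TruncFam ℓ χ) (n : ℕ) (hf : IsSobolevUnit w f) (j : Fin ℓ) :
    IsWBounded w 3 (pd j fun y => χ n y * f y) := by
  have hpd : pd j (fun y => χ n y * f y) = fun y => χ n y * pd j f y + pd j (χ n) y * f y :=
    funext fun y => pd_mul (hχ.differentiable n y) (hf.differentiable y) j
  have h := (hχ.isWBounded_mul n (hf.isWBounded_pd j)).add
    (hf.isWBounded.mul (measurable_pd j (χ n)) (hχ.deriv_bdd n j))
  rw [hpd]
  convert h using 1
  norm_num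

lemma eventually_exists_sublevel (hχ : TruncFam ℓ χ) (hw : IsCoerciveWeight w) {p : ℝ → Prop}
    (hp : ∀ᶠ M in atTop, p M) :
    ∀ᶠ n in atTop, ∃ M, p M ∧ ∀ x, w x ≤ M → χ n =ᶠ[nhds x] fun _ => 1 := by
  obtain ⟨M, hM⟩ := hp.exists
  obtain ⟨R, hR⟩ := (hw.isBounded_sublevel (M + 1)).exists_norm_le
  filter_upwards [eventually_ge_atTop ⌈R⌉₊] with n hn
  refine ⟨M, hM, fun x hx => ?_⟩
  have hnear : ∀ᶠ y in nhds x, w y < M + 1 :=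
    hw.continuous.continuousAt.eventually_lt_const (hx.trans_lt (lt_add_one M))
  filter_upwards [hnear] with y hy
  exact hχ.eq_one n y fun i =>
    (norm_le_pi_norm y i).trans ((hR y hy.le).trans (Nat.ceil_le.1 hn))

variable {T : ((Fin ℓ → ℝ) → ℝ) → (Fin ℓ → ℝ) → ℝ} {ε : ℝ}

lemma eventually_abs_sub_apply_mul_le (hχ : TruncFam ℓ χ) (hw : IsCoerciveWeight w)
    (hT : IsSeparableOp w T) (hom : IsHomogeneousOp T) (c : ℝ) (hε : 0 < ε) :
    ∀ᶠ n in atTop, ∀ f, IsWBounded w c f →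
      ∀ x, |T f x - T (fun y => χ n y * f y) x| ≤ ε * w x := by
  filter_upwards [hχ.eventually_exists_sublevel hw
    (hT.eventually_abs_sub_le hom hw.continuous.measurable hw.nonneg c hε)] with n hn f hf
  obtain ⟨M, hM, hχM⟩ := hn
  exact hM _ _ hf (hχ.isWBounded_mul n hf) fun y hy => by rw [(hχM y hy).eq_of_nhds, one_mul]

theorem eventually_abs_sub_mul_apply_mul_le (hχ : TruncFam ℓ χ) (hw : IsCoerciveWeight w)
    (hT : IsSeparableOp w T) (hom : IsHomogeneousOp T) (hbdd : IsSupBoundedOp T) (c : ℝ)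
    (hε : 0 < ε) :
    ∀ᶠ n in atTop, ∀ f, IsWBounded w c f →
      ∀ x, |T f x - χ n x * T (fun y => χ n y * f y) x| ≤ ε * w x := by
  filter_upwards [hχ.eventually_exists_sublevel hw
    (hT.eventually_abs_sub_mul_le hom hbdd hw.continuous.measurable hw.nonneg c hε)]
    with n hn f hf x
  obtain ⟨M, hM, hχM⟩ := hn
  exact hM _ _ hf (hχ.isWBounded_mul n hf)
    (fun y hy => by rw [(hχM y hy).eq_of_nhds, one_mul]) x _ (hχ.mem01 n x)
    fun hx => (hχM x hx).eq_of_nhds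

lemma pd_mul_of_eventuallyEq_one {n : ℕ} {x : Fin ℓ → ℝ} (h : χ n =ᶠ[nhds x] fun _ => 1)
    (j : Fin ℓ) : pd j (fun y => χ n y * f y) x = pd j f x :=
  pd_congr (h.mono fun y hy => by rw [hy, one_mul]) j

lemma eventually_abs_sub_apply_pd_mul_le (hχ : TruncFam ℓ χ) (hw : IsCoerciveWeight w)
    (hT : IsSeparableOp w T) (hom : IsHomogeneousOp T) (j : Fin ℓ) (hε : 0 < ε) :
    ∀ᶠ n in atTop, ∀ f, IsSobolevUnit w f →
      ∀ x, |T (pd j f) x - T (pd j fun y => χ n y * f y) x| ≤ ε * w x := by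
  filter_upwards [hχ.eventually_exists_sublevel hw
    (hT.eventually_abs_sub_le hom hw.continuous.measurable hw.nonneg 3 hε)] with n hn f hf
  obtain ⟨M, hM, hχM⟩ := hn
  exact hM _ _ ((hf.isWBounded_pd j).mono hw.nonneg (by norm_num)) (hχ.isWBounded_pd_mul n hf j)
    fun y hy => (pd_mul_of_eventuallyEq_one (hχM y hy) j).symm

lemma eventually_abs_sub_mul_apply_pd_mul_le (hχ : TruncFam ℓ χ) (hw : IsCoerciveWeight w)
    (hT : IsSeparableOp w T) (hom : IsHomogeneousOp T) (hbdd : IsSupBoundedOp T) (j : Fin ℓ)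
    (hε : 0 < ε) :
    ∀ᶠ n in atTop, ∀ f, IsSobolevUnit w f →
      ∀ x, |T (pd j f) x - χ n x * T (pd j fun y => χ n y * f y) x| ≤ ε * w x := by
  filter_upwards [hχ.eventually_exists_sublevel hw
    (hT.eventually_abs_sub_mul_le hom hbdd hw.continuous.measurable hw.nonneg 3 hε)]
    with n hn f hf x
  obtain ⟨M, hM, hχM⟩ := hn
  exact hM _ _ ((hf.isWBounded_pd j).mono hw.nonneg (by norm_num)) (hχ.isWBounded_pd_mul n hf j)
    (fun y hy => (pd_mul_of_eventuallyEq_one (hχM y hy) j).symm) x _ (hχ.mem01 n x)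
    fun hx => (hχM x hx).eq_of_nhds

/-- `∂ᵢ χ_n` vanishes on the sublevel sets of `w` where `χ_n = 1`, and `T` is small off them. -/
lemma eventually_abs_pd_mul_apply_mul_le (hχ : TruncFam ℓ χ) (hw : IsCoerciveWeight w)
    (hT : IsSeparableOp w T) (hom : IsHomogeneousOp T) (hbdd : IsSupBoundedOp T) (c : ℝ)
    (hε : 0 < ε) :
    ∀ᶠ n in atTop, ∀ f, IsWBounded w c f →
      ∀ i x, |pd i (χ n) x * T (fun y => χ n y * f y) x| ≤ ε * w x := by
  filter_upwards [hχ.eventually_exists_sublevel hw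
    (hT.eventually_abs_le_of_le hom hbdd hw.continuous.measurable hw.nonneg c (half_pos hε))]
    with n hn f hf i x
  obtain ⟨M, hM, hχM⟩ := hn
  rcases le_or_gt (w x) M with hx | hx
  · rw [pd_congr (hχM x hx), pd, fderiv_fun_const, Pi.zero_apply, zero_apply, zero_mul, abs_zero]
    exact mul_nonneg hε.le (hw.nonneg x)
  · calc |pd i (χ n) x * T (fun y => χ n y * f y) x|
        = |pd i (χ n) x| * |T (fun y => χ n y * f y) x| := abs_mul _ _
      _ ≤ 2 * (ε / 2 * w x) := mul_le_mul (hχ.deriv_bdd n i x)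
          (hM _ (hχ.isWBounded_mul n hf) x hx.le) (abs_nonneg _) zero_le_two
      _ = ε * w x := by ring

end TruncFam

end Truncation

section Approximation

variable {ℓ m : ℕ} {μ : Measure (Fin m → ℝ)}
  {a : (Fin ℓ → ℝ) → (Fin m → ℝ) → (Fin ℓ → ℝ)} {w f : (Fin ℓ → ℝ) → ℝ}
  {χ : ℕ → (Fin ℓ → ℝ) → ℝ} {t : ℕ} {ε : ℝ}

lemma abs_sum_sub_sum_le_card_mul {ι : Type*} [Fintype ι] {u v : ι → ℝ} {c : ℝ}
    (h : ∀ j, |u j - v j| ≤ c) : |∑ j, u j - ∑ j, v j| ≤ Fintype.card ι * c := by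
  rw [← Finset.sum_sub_distrib]
  refine (Finset.abs_sum_le_sum_abs _ _).trans
    ((Finset.sum_le_card_nsmul _ _ c fun j _ => h j).trans_eq ?_)
  rw [Finset.card_univ, nsmul_eq_mul]

lemma tendsto_Pt_mul (hχ : TruncFam ℓ χ) (hw : IsCoerciveWeight w)
    (hP : IsSeparableOp w (Pt μ a t)) {c : ℝ} (hf : IsWBounded w c f) (x : Fin ℓ → ℝ) :
    Tendsto (fun n => Pt μ a t (fun y => χ n y * f y) x) atTop (nhds (Pt μ a t f x)) := by
  rw [Metric.tendsto_nhds]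
  intro ε hε
  have hx := hw.pos x
  filter_upwards [hχ.eventually_abs_sub_apply_mul_le hw hP (isHomogeneousOp_Pt t) c
    (show 0 < ε / 2 / w x by positivity)] with n hn
  rw [dist_comm, Real.dist_eq]
  refine (hn f hf x).trans_lt ?_
  rw [div_mul_cancel₀ _ hx.ne']
  exact half_lt_self hε

variable [IsFiniteMeasure μ]

lemma tendstoUniformlyOnFilter_pd_Pt_mul (ha : IsSmoothModel a) (hχ : TruncFam ℓ χ)
    (hw : IsCoerciveWeight w) (hQ : ∀ i j, IsSeparableOp w (Qtij μ a t i j))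
    (hf : IsSobolevUnit w f) (x : Fin ℓ → ℝ) :
    TendstoUniformlyOnFilter (fun n y i => pd i (Pt μ a t fun z => χ n z * f z) y)
      (fun y i => ∑ j, Qtij μ a t i j (pd j f) y) atTop (nhds x) := by
  refine tendstoUniformlyOnFilter_of_dist_le_mul hw.continuous.continuousAt fun ε hε => ?_
  have hη : 0 < ε / (ℓ + 1) := by positivity
  have hterm : ∀ᶠ n in atTop, ∀ i j, ∀ g, IsSobolevUnit w g → ∀ y, |Qtij μ a t i j (pd j g) y -
      Qtij μ a t i j (pd j fun z => χ n z * g z) y| ≤ ε / (ℓ + 1) * w y :=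
    eventually_all.2 fun i => eventually_all.2 fun j =>
      hχ.eventually_abs_sub_apply_pd_mul_le hw (hQ i j) (isHomogeneousOp_Qtij t i j) j hη
  filter_upwards [hterm] with n hn y
  refine (dist_pi_le_iff (mul_nonneg hε.le (hw.nonneg y))).2 fun i => ?_
  rw [(hχ.isBddDiff_mul n hf.contDiff).pd_Pt ha, Real.dist_eq]
  calc _ ≤ Fintype.card (Fin ℓ) * (ε / (ℓ + 1) * w y) :=
        abs_sum_sub_sum_le_card_mul fun j => hn i j f hf y
    _ = ℓ / (ℓ + 1) * (ε * w y) := by rw [Fintype.card_fin]; ring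
    _ ≤ ε * w y := mul_le_of_le_one_left (mul_nonneg hε.le (hw.nonneg y))
      (div_le_one_of_le₀ (by linarith) (by positivity))

theorem hasFDerivAt_Pt (ha : IsSmoothModel a) (hχ : TruncFam ℓ χ) (hw : IsCoerciveWeight w)
    (hP : IsSeparableOp w (Pt μ a t)) (hQ : ∀ i j, IsSeparableOp w (Qtij μ a t i j))
    (hf : IsSobolevUnit w f) (x : Fin ℓ → ℝ) :
    HasFDerivAt (Pt μ a t f) (dotProductCLM ℓ fun i => ∑ j, Qtij μ a t i j (pd j f) x) x :=
  hasFDerivAt_of_tendstoUniformlyOnFilter_pd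
    (fun n => ((hχ.isBddDiff_mul n hf.contDiff).Pt ha t).differentiable)
    (tendstoUniformlyOnFilter_pd_Pt_mul ha hχ hw hQ hf x)
    (tendsto_Pt_mul hχ hw hP hf.isWBounded)

lemma pd_Pt_sub_mul_Pt_mul (ha : IsSmoothModel a) (hχ : TruncFam ℓ χ) (hw : IsCoerciveWeight w)
    (hP : IsSeparableOp w (Pt μ a t)) (hQ : ∀ i j, IsSeparableOp w (Qtij μ a t i j))
    (hf : IsSobolevUnit w f) (n : ℕ) (i : Fin ℓ) (x : Fin ℓ → ℝ) :
    pd i (fun x => Pt μ a t f x - χ n x * Pt μ a t (fun y => χ n y * f y) x) x =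
      (∑ j, Qtij μ a t i j (pd j f) x -
        ∑ j, χ n x * Qtij μ a t i j (pd j fun y => χ n y * f y) x) -
        pd i (χ n) x * Pt μ a t (fun y => χ n y * f y) x := by
  have hχf := hχ.isBddDiff_mul n hf.contDiff
  have hPf := hasFDerivAt_Pt ha hχ hw hP hQ hf x
  have hPχf : DifferentiableAt ℝ (Pt μ a t fun y => χ n y * f y) x :=
    (hχf.Pt ha t).differentiable x
  have hχn := hχ.differentiable n x
  rw [pd_sub hPf.differentiableAt (hχn.fun_mul hPχf), pd_mul hχn hPχf, hχf.pd_Pt ha,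
    pd_eq_of_hasFDerivAt_dotProductCLM hPf, Finset.mul_sum, sub_sub]

theorem eventually_abs_pd_Pt_sub_mul_Pt_mul_le (ha : IsSmoothModel a) (hχ : TruncFam ℓ χ)
    (hw : IsCoerciveWeight w) (hP : IsSeparableOp w (Pt μ a t))
    (hQ : ∀ i j, IsSeparableOp w (Qtij μ a t i j)) (hε : 0 < ε) :
    ∀ᶠ n in atTop, ∀ f, IsSobolevUnit w f → ∀ i x,
      |pd i (fun x => Pt μ a t f x - χ n x * Pt μ a t (fun y => χ n y * f y) x) x| ≤ ε * w x := by
  have hη : 0 < ε / (ℓ + 1) := by positivity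
  have hterm : ∀ᶠ n in atTop, ∀ i j, ∀ f, IsSobolevUnit w f → ∀ x, |Qtij μ a t i j (pd j f) x -
      χ n x * Qtij μ a t i j (pd j fun y => χ n y * f y) x| ≤ ε / (ℓ + 1) * w x :=
    eventually_all.2 fun i => eventually_all.2 fun j =>
      hχ.eventually_abs_sub_mul_apply_pd_mul_le hw (hQ i j) (isHomogeneousOp_Qtij t i j)
        (isSupBoundedOp_Qtij ha.exists_norm_fderiv_le t i j) j hη
  filter_upwards [hterm, hχ.eventually_abs_pd_mul_apply_mul_le hw hP (isHomogeneousOp_Pt t)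
    (isSupBoundedOp_Pt t) 1 hη] with n hn hrest f hf i x
  rw [pd_Pt_sub_mul_Pt_mul ha hχ hw hP hQ hf]
  calc _ ≤ Fintype.card (Fin ℓ) * (ε / (ℓ + 1) * w x) + ε / (ℓ + 1) * w x :=
        (abs_sub _ _).trans (add_le_add (abs_sum_sub_sum_le_card_mul fun j => hn i j f hf x)
          (hrest f hf.isWBounded i x))
    _ = ε * w x := by rw [Fintype.card_fin]; field_simp

lemma ewnorm_le_ofReal (hw : ∀ x, 0 < w x) (hf : ∀ x, |f x| ≤ ε * w x) :
    ewnorm w f ≤ ENNReal.ofReal ε :=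
  iSup_le fun x => ENNReal.ofReal_le_ofReal ((div_le_iff₀ (hw x)).2 (hf x))

lemma tendsto_iSup_nhds_zero_of_le_ofReal {ι α : Type*} {l : Filter α} {F : α → ι → ℝ≥0∞}
    (h : ∀ ε : ℝ, 0 < ε → ∀ᶠ n in l, ∀ i, F n i ≤ ENNReal.ofReal ε) :
    Tendsto (fun n => ⨆ i, F n i) l (nhds 0) := by
  rw [ENNReal.tendsto_nhds_zero]
  intro ε hε
  obtain ⟨r, hr0, hr⟩ := ENNReal.lt_iff_exists_nnreal_btwn.1 hε
  filter_upwards [h r (by exact_mod_cast hr0)] with n hn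
  exact (iSup_le hn).trans (ENNReal.ofReal_coe_nnreal.trans_le hr.le)

theorem stmt19_general (ha : IsSmoothModel a) (hw : IsCoerciveWeight w) (hχ : TruncFam ℓ χ)
    (hP : IsSeparableOp w (Pt μ a t)) (hQ : ∀ i j, IsSeparableOp w (Qtij μ a t i j)) :
    Tendsto (fun n : ℕ => ⨆ f : {f : (Fin ℓ → ℝ) → ℝ // MemLw1 w f ∧ (∀ x, |f x| ≤ w x) ∧
        ∀ (i : Fin ℓ) x, |pd i f x| ≤ w x},
      ewnorm1 w (fun x => Pt μ a t f.1 x - χ n x * Pt μ a t (fun y => χ n y * f.1 y) x))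
      atTop (nhds 0) ∧
    ∀ i j : Fin ℓ, Tendsto
      (fun n : ℕ => ⨆ g : {g : (Fin ℓ → ℝ) → ℝ // Measurable g ∧ ∀ x, |g x| ≤ w x},
        ewnorm w (fun x => Qtij μ a t i j g.1 x -
          χ n x * Qtij μ a t i j (fun y => χ n y * g.1 y) x))
      atTop (nhds 0) := by
  refine ⟨tendsto_iSup_nhds_zero_of_le_ofReal fun ε hε => ?_,
    fun i j => tendsto_iSup_nhds_zero_of_le_ofReal fun ε hε => ?_⟩
  · filter_upwards [hχ.eventually_abs_sub_mul_apply_mul_le hw hP (isHomogeneousOp_Pt t)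
      (isSupBoundedOp_Pt t) 1 hε, eventually_abs_pd_Pt_sub_mul_Pt_mul_le ha hχ hw hP hQ hε]
      with n hn hpd f
    obtain ⟨f, ⟨hfC, -, -⟩, hfw, hfpd⟩ := f
    have hf : IsSobolevUnit w f := ⟨hfC, hfw, hfpd⟩
    exact sup_le (ewnorm_le_ofReal hw.pos (hn f hf.isWBounded))
      (iSup_le fun i => ewnorm_le_ofReal hw.pos (hpd f hf i))
  · filter_upwards [hχ.eventually_abs_sub_mul_apply_mul_le hw (hQ i j)
      (isHomogeneousOp_Qtij t i j) (isSupBoundedOp_Qtij ha.exists_norm_fderiv_le t i j) 1 hε]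
      with n hn g
    exact ewnorm_le_ofReal hw.pos (hn g.1 (isWBounded_one g.2.1 g.2.2))

end Approximation

namespace Assumptions

variable {ℓ m : ℕ} {μ : Measure (Fin m → ℝ)} {a : (Fin ℓ → ℝ) → (Fin m → ℝ) → (Fin ℓ → ℝ)}
  {V W : (Fin ℓ → ℝ) → ℝ} {C : Set (Fin ℓ → ℝ)} {δ b : ℝ}

lemma isSmoothModel (H : Assumptions ℓ m μ a V W C δ b) : IsSmoothModel a :=
  ⟨H.ha_cont, fun n => (H.hA1_smooth n).differentiable one_ne_zero, H.hA1_bdd⟩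

lemma isCoerciveWeight_exp (H : Assumptions ℓ m μ a V W C δ b) :
    IsCoerciveWeight fun x => Real.exp (V x) where
  continuous := H.hV_smooth.continuous.rexp
  pos := fun x => Real.exp_pos (V x)
  isBounded_sublevel := fun M => (H.hV_cpt (Real.log M)).isBounded.subset fun x hx =>
    (Real.le_log_iff_exp_le ((Real.exp_pos (V x)).trans_le hx)).2 hx

end Assumptions

/-- Lemma A.5 / `t:PfandQtruncation`: under (A1)–(A4), if
for some `t ≥ 1` the kernel `P^t` and the component kernels `Q^t_{i,j}` are
separable in `L_v^∞` (`v = e^V`), then they can be approximated by their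
two-sided truncations: `χ_n · P^t(χ_n ·) → P^t` in the induced
`‖·‖_{v,1}`-operator norm on `L_v^1`, and `χ_n · Q^t_{i,j}(χ_n ·) → Q^t_{i,j}`
in the induced `‖·‖_v`-operator norm. -/
theorem stmt19 {ℓ m : ℕ} (μ : Measure (Fin m → ℝ))
    (a : (Fin ℓ → ℝ) → (Fin m → ℝ) → (Fin ℓ → ℝ))
    (V W : (Fin ℓ → ℝ) → ℝ) (C : Set (Fin ℓ → ℝ)) (δ b : ℝ)
    (H : Assumptions ℓ m μ a V W C δ b)
    (χ : ℕ → (Fin ℓ → ℝ) → ℝ) (hχ : TruncFam ℓ χ)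
    (t : ℕ) (ht : 1 ≤ t)
    -- P^t separable in L_v^∞
    (hPsep : ∀ ε : ℝ, 0 < ε →
      ∃ (N : ℕ) (s : Fin N → (Fin ℓ → ℝ) → ℝ)
        (νp νm : Fin N → Measure (Fin ℓ → ℝ)),
        (∀ i, Measurable (s i) ∧ ∃ M : ℝ, ∀ x, |s i x| ≤ M * Real.exp (V x)) ∧
        (∀ i, IsFiniteMeasure (νp i) ∧ IsFiniteMeasure (νm i) ∧
          (∫⁻ x, ENNReal.ofReal (Real.exp (V x)) ∂(νp i)) ≠ ⊤ ∧
          (∫⁻ x, ENNReal.ofReal (Real.exp (V x)) ∂(νm i)) ≠ ⊤) ∧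
        ∀ f : (Fin ℓ → ℝ) → ℝ, Measurable f → (∀ x, |f x| ≤ Real.exp (V x)) →
          ∀ x, |Pt μ a t f x -
            ∑ i, s i x * ((∫ y, f y ∂(νp i)) - ∫ y, f y ∂(νm i))| ≤
              ε * Real.exp (V x))
    -- each Q^t_{i,j} separable in L_v^∞
    (hQsep : ∀ i j : Fin ℓ, ∀ ε : ℝ, 0 < ε →
      ∃ (N : ℕ) (s : Fin N → (Fin ℓ → ℝ) → ℝ)
        (νp νm : Fin N → Measure (Fin ℓ → ℝ)),
        (∀ k, Measurable (s k) ∧ ∃ M : ℝ, ∀ x, |s k x| ≤ M * Real.exp (V x)) ∧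
        (∀ k, IsFiniteMeasure (νp k) ∧ IsFiniteMeasure (νm k) ∧
          (∫⁻ x, ENNReal.ofReal (Real.exp (V x)) ∂(νp k)) ≠ ⊤ ∧
          (∫⁻ x, ENNReal.ofReal (Real.exp (V x)) ∂(νm k)) ≠ ⊤) ∧
        ∀ g : (Fin ℓ → ℝ) → ℝ, Measurable g → (∀ x, |g x| ≤ Real.exp (V x)) →
          ∀ x, |Qtij μ a t i j g x -
            ∑ k, s k x * ((∫ y, g y ∂(νp k)) - ∫ y, g y ∂(νm k))| ≤
              ε * Real.exp (V x)) :
    Filter.Tendsto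
      (fun n : ℕ =>
        ⨆ f : {f : (Fin ℓ → ℝ) → ℝ // MemLw1 (fun x => Real.exp (V x)) f ∧
            (∀ x, |f x| ≤ Real.exp (V x)) ∧
            ∀ (i : Fin ℓ) x, |pd i f x| ≤ Real.exp (V x)},
          ewnorm1 (fun x => Real.exp (V x))
            (fun x => Pt μ a t f.1 x -
              χ n x * Pt μ a t (fun y => χ n y * f.1 y) x))
      Filter.atTop (nhds 0) ∧
    ∀ i j : Fin ℓ,
      Filter.Tendsto
        (fun n : ℕ =>
          ⨆ g : {g : (Fin ℓ → ℝ) → ℝ // Measurable g ∧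
              ∀ x, |g x| ≤ Real.exp (V x)},
            ewnorm (fun x => Real.exp (V x))
              (fun x => Qtij μ a t i j g.1 x -
                χ n x * Qtij μ a t i j (fun y => χ n y * g.1 y) x))
        Filter.atTop (nhds 0) := by
  have := H.hμ
  exact stmt19_general H.isSmoothModel H.isCoerciveWeight_exp hχ hPsep hQsep

end
end
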